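/- arXiv:1103.0565 — 3 statements merged into one kernel-verified Lean document; each statement's English description precedes it below -/
import Mathlib

section
/- Let S be a locally noetherian scheme, U a dense open of S, f : X → S a smooth morphism, and M a coherent O_X-module. If M is invertible over X_U, flat over S, and has no embedded components on the fibers of X/S (i.e. M ⊗ k(s) has no embedded associated points for every s ∈ S), then M is an invertible O_X-module. -/
set_option synthInstance.maxHeartbeats 400000

section
open TensorProduct

namespace InvFlat

theorem flat_left {B K N M : Type} [CommRing B] [AddCommGroup K] [AddCommGroup N] [AddCommGroup M]
    [Module B K] [Module B N] [Module B M] (i : K →ₗ[B] N) (f : N →ₗ[B] M)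
    (hi : Function.Injective i) (hex : Function.Exact i f) (hf : Function.Surjective f)
    [Module.Flat B N] [Module.Flat B M] : Module.Flat B K := by
  rw [Module.Flat.iff_rTensor_preserves_injective_linearMap]
  intro P P' _ _ _ _ j hj
  have h1 := LinearMap.lTensor_injective_of_exact_of_flat f hf i hi hex P
  have h2 := Module.Flat.rTensor_preserves_injective_linearMap (M := N) j hj
  have : (i.lTensor P') ∘ (j.rTensor K) = (j.rTensor N) ∘ (i.lTensor P) := by
    rw [← LinearMap.coe_comp, ← LinearMap.coe_comp, LinearMap.lTensor_comp_rTensor,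
      LinearMap.rTensor_comp_lTensor]
  exact Function.Injective.of_comp (f := i.lTensor P') (this ▸ h2.comp h1)

theorem flat_mid {B K N M : Type} [CommRing B] [AddCommGroup K] [AddCommGroup N] [AddCommGroup M]
    [Module B K] [Module B N] [Module B M] (i : K →ₗ[B] N) (f : N →ₗ[B] M)
    (hi : Function.Injective i) (hex : Function.Exact i f) (hf : Function.Surjective f)
    [Module.Flat B K] [Module.Flat B M] : Module.Flat B N := by
  rw [Module.Flat.iff_rTensor_preserves_injective_linearMap]
  intro P P' _ _ _ _ j hj
  have h1 := LinearMap.lTensor_injective_of_exact_of_flat f hf i hi hex P'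
  have hK := Module.Flat.rTensor_preserves_injective_linearMap (M := K) j hj
  have hM := Module.Flat.rTensor_preserves_injective_linearMap (M := M) j hj
  rw [injective_iff_map_eq_zero]
  intro x hx
  have c1 : ∀ y, (f.lTensor P') (j.rTensor N y) = j.rTensor M (f.lTensor P y) := fun y => by
    rw [← LinearMap.comp_apply, ← LinearMap.comp_apply, LinearMap.lTensor_comp_rTensor,
      LinearMap.rTensor_comp_lTensor]
  have c2 : ∀ y, (i.lTensor P') (j.rTensor K y) = j.rTensor N (i.lTensor P y) := fun y => by
    rw [← LinearMap.comp_apply, ← LinearMap.comp_apply, LinearMap.lTensor_comp_rTensor,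
      LinearMap.rTensor_comp_lTensor]
  have h2 : f.lTensor P x = 0 := by
    apply hM; rw [← c1, hx]; simp
  obtain ⟨y, rfl⟩ := (lTensor_exact P hex hf x).1 h2
  have : j.rTensor K y = 0 := by
    apply h1; rw [c2, hx]; simp
  have : y = 0 := hK (by simpa using this)
  simp [this]

/-- flat dimension at most `n` -/
def FDL (B : Type) [CommRing B] : ℕ → ∀ (M : Type) [AddCommGroup M] [Module B M], Prop
  | 0, M, _, _ => Module.Flat B M
  | n + 1, M, _, _ => ∀ (K F : Type) [AddCommGroup K] [AddCommGroup F] [Module B K] [Module B F]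
      (i : K →ₗ[B] F) (f : F →ₗ[B] M), Function.Injective i → Function.Exact i f →
      Function.Surjective f → Module.Flat B F → FDL B n K

theorem FDL_of_unramified (B L : Type) [CommRing B] [CommRing L] [Algebra B L] [Module.Flat B L]
    [Algebra.FormallyUnramified B L] [Algebra.EssFiniteType B L] (n : ℕ) (M : Type)
    [AddCommGroup M] [Module L M] [Module B M] [IsScalarTower B L M] (h : FDL B n M) :
    FDL L n M := by
  induction n generalizing M with
  | zero => 
    have : Module.Flat B M := h
    exact Algebra.FormallyUnramified.flat_of_restrictScalars B L M
  | succ n ih =>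
    intro K F _ _ _ _ i f hi hex hf hF
    let := Module.compHom K (algebraMap B L)
    let := Module.compHom F (algebraMap B L)
    have : IsScalarTower B L K := ⟨fun x y z => by rw [Algebra.smul_def, mul_smul]; rfl⟩
    have : IsScalarTower B L F := ⟨fun x y z => by rw [Algebra.smul_def, mul_smul]; rfl⟩
    exact ih K (h K F (i.restrictScalars B) (f.restrictScalars B) hi hex hf (Module.Flat.trans B L F))

end InvFlat
end

section
open TensorProduct Polynomial
set_option linter.unusedSectionVars false

namespace InvFlat

section
variable (S M : Type) [CommRing S] [AddCommGroup M] [Module S M] [Module S[X] M]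
  [IsScalarTower S S[X] M]

noncomputable def xmul : M →ₗ[S] M := (LinearMap.lsmul S[X] M X).restrictScalars S

noncomputable def pii : S[X] ⊗[S] M →ₗ[S[X]] M :=
  TensorProduct.AlgebraTensorModule.lift
    ((LinearMap.lsmul S[X] M).restrictScalars₁₂ S[X] S)

theorem pii_tmul (p : S[X]) (m : M) : pii S M (p ⊗ₜ m) = p • m := rfl

noncomputable def theta : S[X] ⊗[S] M →ₗ[S[X]] S[X] ⊗[S] M :=
  LinearMap.lsmul S[X] _ X - TensorProduct.AlgebraTensorModule.lTensor S[X] S[X] (xmul S M)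

theorem theta_tmul (p : S[X]) (m : M) :
    theta S M (p ⊗ₜ m) = (X * p) ⊗ₜ m - p ⊗ₜ ((X : S[X]) • m) := by
  simp [theta, xmul, TensorProduct.smul_tmul']

noncomputable def cf (k : ℕ) : S[X] ⊗[S] M →ₗ[S] M :=
  (TensorProduct.lid S M).toLinearMap ∘ₗ (Polynomial.lcoeff S k).rTensor M

theorem cf_tmul (k : ℕ) (p : S[X]) (m : M) : cf S M k (p ⊗ₜ m) = p.coeff k • m := rfl

theorem cf_theta (k : ℕ) (e : S[X] ⊗[S] M) :
    cf S M (k + 1) (theta S M e) = cf S M k e - (X : S[X]) • cf S M (k + 1) e := by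
  induction e with
  | zero => simp
  | tmul p m => 
    rw [theta_tmul, map_sub, cf_tmul, cf_tmul, cf_tmul, cf_tmul, coeff_X_mul, smul_comm]
  | add x y hx hy => simp only [map_add, hx, hy, smul_add]; abel

theorem cf_exp (e : S[X] ⊗[S] M) : ∃ N, ∀ n, N ≤ n → cf S M n e = 0 ∧
    e = ∑ k ∈ Finset.range n, (X ^ k : S[X]) ⊗ₜ[S] cf S M k e := by
  induction e with
  | zero => exact ⟨0, by simp⟩
  | tmul p m => 
    refine ⟨p.natDegree + 1, fun n hn => ⟨?_, ?_⟩⟩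
    · rw [cf_tmul, coeff_eq_zero_of_natDegree_lt (by omega), zero_smul]
    · conv_lhs => rw [p.as_sum_range' n (by omega), TensorProduct.sum_tmul]
      refine Finset.sum_congr rfl fun k _ => ?_
      rw [cf_tmul, ← TensorProduct.smul_tmul, Polynomial.smul_X_eq_monomial]
  | add x y hx hy => 
    obtain ⟨N1, h1⟩ := hx
    obtain ⟨N2, h2⟩ := hy
    refine ⟨max N1 N2, fun n hn => ⟨?_, ?_⟩⟩
    · rw [map_add, (h1 n (by omega)).1, (h2 n (by omega)).1, add_zero]
    · simp only [map_add, TensorProduct.tmul_add, Finset.sum_add_distrib]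
      rw [← (h1 n (by omega)).2, ← (h2 n (by omega)).2]

theorem theta_inj : Function.Injective (theta S M) := by
  rw [injective_iff_map_eq_zero]
  intro e he
  obtain ⟨N, hN⟩ := cf_exp S M e
  have key : ∀ k, cf S M k e = (X : S[X]) • cf S M (k + 1) e := fun k => by
    have := cf_theta S M k e
    rw [he, map_zero] at this
    exact (sub_eq_zero.1 this.symm)
  have : ∀ j k, N ≤ k + j → cf S M k e = 0 := by
    intro j
    induction j with
    | zero => intro k hk; exact (hN k (by omega)).1
    | succ j ih => intro k hk; rw [key, ih (k+1) (by omega), smul_zero]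
  rw [(hN N le_rfl).2]
  refine Finset.sum_eq_zero fun k _ => ?_
  rw [this N k (by omega), TensorProduct.tmul_zero]

theorem sub_mem (e : S[X] ⊗[S] M) :
    e - (1 : S[X]) ⊗ₜ[S] pii S M e ∈ LinearMap.range (theta S M) := by
  induction e with
  | zero => simp
  | tmul p m =>
    induction p using Polynomial.induction_on' with
    | add p q hp hq => 
      rw [TensorProduct.add_tmul, map_add, TensorProduct.tmul_add, add_sub_add_comm]
      exact Submodule.add_mem _ hp hq
    | monomial n a =>
      rw [← Polynomial.smul_X_eq_monomial, pii_tmul]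
      induction n generalizing m with
      | zero => simp [TensorProduct.smul_tmul]
      | succ n ih => 
        have h1 := ih ((X : S[X]) • m)
        have h2 : theta S M ((a • X ^ n : S[X]) ⊗ₜ m) ∈ LinearMap.range (theta S M) := ⟨_, rfl⟩
        rw [theta_tmul] at h2
        convert Submodule.add_mem _ h2 h1 using 1
        rw [sub_add_sub_cancel, smul_smul (M := S[X]) (α := M)]
        simp [pow_succ, mul_comm X]
  | add x y hx hy =>
      rw [map_add, TensorProduct.tmul_add, add_sub_add_comm]
      exact Submodule.add_mem _ hx hy

theorem theta_exact : Function.Exact (theta S M) (pii S M) := by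
  intro e
  constructor
  · intro h
    have := sub_mem S M e
    rwa [h, TensorProduct.tmul_zero, sub_zero] at this
  · rintro ⟨e, rfl⟩
    induction e with
    | zero => simp
    | tmul p m => rw [theta_tmul, map_sub, pii_tmul, pii_tmul, smul_smul, mul_comm, sub_self]
    | add x y hx hy => rw [map_add, map_add, hx, hy, add_zero]

theorem FDL_poly_zero [Module.Flat S M] : FDL S[X] 1 M := by
  intro K F _ _ _ _ i f hi hex hf hF
  let G : Submodule S[X] (F × (S[X] ⊗[S] M)) :=
    LinearMap.ker (f ∘ₗ LinearMap.fst _ _ _ - pii S M ∘ₗ LinearMap.snd _ _ _)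
  have hG : ∀ x, x ∈ G ↔ f x.1 = pii S M x.2 := fun x => by
    simp [G, sub_eq_zero]
  have pis : Function.Surjective (pii S M) := fun m => ⟨1 ⊗ₜ m, by simp [pii_tmul]⟩
  have hGflat : Module.Flat S[X] G := by
    let j : S[X] ⊗[S] M →ₗ[S[X]] G := (LinearMap.prod 0 (theta S M)).codRestrict G (fun x => by
      rw [hG]; simpa using ((theta_exact S M).apply_apply_eq_zero x).symm)
    let q1 : G →ₗ[S[X]] F := (LinearMap.fst S[X] F (S[X] ⊗[S] M)) ∘ₗ G.subtype
    refine flat_mid (B := S[X]) (K := S[X] ⊗[S] M) (N := G) (M := F) j q1 ?_ ?_ ?_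
    · intro a b hab
      exact theta_inj S M (congrArg (fun z : G => z.1.2) hab)
    · rintro ⟨⟨a, e⟩, h⟩
      rw [hG] at h
      constructor
      · intro h0
        have h0 : a = 0 := h0
        subst h0
        obtain ⟨y, hy⟩ := (theta_exact S M e).1 (by simpa using h.symm)
        exact ⟨y, Subtype.ext (Prod.ext rfl hy)⟩
      · rintro ⟨y, hy⟩
        rw [← hy]; rfl
    · intro a
      obtain ⟨e, he⟩ := pis (f a)
      exact ⟨⟨(a, e), (hG _).2 he.symm⟩, rfl⟩
  let j : K →ₗ[S[X]] G := (LinearMap.prod i 0).codRestrict G (fun x => by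
      rw [hG]; simpa using (hex.apply_apply_eq_zero x))
  let q2 : G →ₗ[S[X]] (S[X] ⊗[S] M) := (LinearMap.snd S[X] F (S[X] ⊗[S] M)) ∘ₗ G.subtype
  refine flat_left (B := S[X]) (K := K) (N := G) (M := S[X] ⊗[S] M) j q2 ?_ ?_ ?_
  · intro a b hab
    exact hi (congrArg (fun z : G => z.1.1) hab)
  · rintro ⟨⟨a, e⟩, h⟩
    rw [hG] at h
    constructor
    · intro h0
      have h0 : e = 0 := h0
      subst h0
      obtain ⟨y, hy⟩ := (hex a).1 (by simpa using h)
      exact ⟨y, Subtype.ext (Prod.ext hy rfl)⟩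
    · rintro ⟨y, hy⟩
      rw [← hy]; rfl
  · intro e
    obtain ⟨a, ha⟩ := hf (pii S M e)
    exact ⟨⟨(a, e), (hG _).2 ha⟩, rfl⟩

end

theorem FDL_poly (S : Type) [CommRing S] (n : ℕ) (M : Type) [AddCommGroup M] [Module S M]
    [Module S[X] M] [IsScalarTower S S[X] M] (h : FDL S n M) : FDL S[X] (n + 1) M := by
  induction n generalizing M with
  | zero => 
    have : Module.Flat S M := h
    exact FDL_poly_zero S M
  | succ n ih =>
    intro K F _ _ _ _ i f hi hex hf hF
    let _ := Module.compHom K (algebraMap S S[X])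
    let _ := Module.compHom F (algebraMap S S[X])
    have : IsScalarTower S S[X] K := ⟨fun x y z => by rw [Algebra.smul_def, mul_smul]; rfl⟩
    have : IsScalarTower S S[X] F := ⟨fun x y z => by rw [Algebra.smul_def, mul_smul]; rfl⟩
    exact ih K (h K F (i.restrictScalars S) (f.restrictScalars S) hi hex hf
      (Module.Flat.trans S S[X] F))

theorem FDL_mvPoly (R : Type) [CommRing R] (n : ℕ) (M : Type) [AddCommGroup M] [Module R M]
    [Module (MvPolynomial (Fin n) R) M] [IsScalarTower R (MvPolynomial (Fin n) R) M]
    [Module.Flat R M] : FDL (MvPolynomial (Fin n) R) n M := by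
  induction n generalizing M with
  | zero =>
    have h : FDL R 0 M := ‹Module.Flat R M›
    have e : Function.Bijective (algebraMap R (MvPolynomial (Fin 0) R)) :=
      ⟨MvPolynomial.C_injective _ _, MvPolynomial.C_surjective _⟩
    let _ : Algebra (MvPolynomial (Fin 0) R) R := (MvPolynomial.isEmptyAlgEquiv R (Fin 0)).toAlgHom.toRingHom.toAlgebra
    have hs : Function.Surjective (algebraMap R (MvPolynomial (Fin 0) R)) := e.2
    have := Module.Flat.of_linearEquiv (LinearEquiv.ofBijective (Algebra.linearMap R (MvPolynomial (Fin 0) R)) e).symm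
    have := Algebra.FormallyUnramified.of_surjective (Algebra.ofId R (MvPolynomial (Fin 0) R)) hs
    exact FDL_of_unramified R _ 0 M h
  | succ n ih =>
    let e := MvPolynomial.finSuccEquiv R n
    let _ : Module (Polynomial (MvPolynomial (Fin n) R)) M := Module.compHom M e.symm.toAlgHom.toRingHom
    let _ : Module (MvPolynomial (Fin n) R) M := Module.compHom M
      (algebraMap (MvPolynomial (Fin n) R) (Polynomial (MvPolynomial (Fin n) R)))
    have : IsScalarTower (MvPolynomial (Fin n) R) (Polynomial (MvPolynomial (Fin n) R)) M := ⟨fun x y z => by rw [Algebra.smul_def, mul_smul]; rfl⟩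
    have : IsScalarTower R (MvPolynomial (Fin n) R) M := by
      refine IsScalarTower.of_algebraMap_smul fun r x => ?_
      change e.symm (Polynomial.C (algebraMap _ _ r)) • x = r • x
      rw [← algebraMap_smul (MvPolynomial (Fin (n+1)) R) r x]
      congr 1
      exact e.symm.commutes r
    have h1 := FDL_poly _ n M (ih M)
    let _ : Algebra (Polynomial (MvPolynomial (Fin n) R)) (MvPolynomial (Fin (n+1)) R) := e.symm.toAlgHom.toRingHom.toAlgebra
    have eb : Function.Bijective (algebraMap (Polynomial (MvPolynomial (Fin n) R)) (MvPolynomial (Fin (n+1)) R)) := e.symm.bijective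
    have := Module.Flat.of_linearEquiv (LinearEquiv.ofBijective (Algebra.linearMap (Polynomial (MvPolynomial (Fin n) R)) (MvPolynomial (Fin (n+1)) R)) eb).symm
    have := Algebra.FormallyUnramified.of_surjective (Algebra.ofId (Polynomial (MvPolynomial (Fin n) R)) (MvPolynomial (Fin (n+1)) R)) eb.2
    have : Algebra.FiniteType (Polynomial (MvPolynomial (Fin n) R)) (MvPolynomial (Fin (n+1)) R) :=
      Algebra.FiniteType.of_surjective (Algebra.ofId _ _) eb.2
    have : IsScalarTower (Polynomial (MvPolynomial (Fin n) R)) (MvPolynomial (Fin (n+1)) R) M := ⟨fun x y z => by rw [Algebra.smul_def, mul_smul]; rfl⟩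
    exact FDL_of_unramified _ _ _ M h1

end InvFlat
end

section
open TensorProduct

namespace InvFlat

theorem exists_coords (R A : Type) [CommRing R] [CommRing A] [Algebra R A] [Algebra.Smooth R A]
    (P : Ideal A) [P.IsPrime] (L : Type) [CommRing L] [Algebra A L] [Algebra R L]
    [IsScalarTower R A L] [IsLocalization.AtPrime L P] :
    ∃ (n : ℕ) (_ : Algebra (MvPolynomial (Fin n) R) L),
      IsScalarTower R (MvPolynomial (Fin n) R) L ∧ Module.Flat (MvPolynomial (Fin n) R) L ∧
      Algebra.FormallyUnramified (MvPolynomial (Fin n) R) L ∧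
      Algebra.EssFiniteType (MvPolynomial (Fin n) R) L ∧
      ∀ (B : Type) [CommRing B] [Algebra (MvPolynomial (Fin n) R) B],
        Function.Bijective (TensorProduct.toIntegralClosure (MvPolynomial (Fin n) R) L B) := by
  obtain ⟨f, hf, n, i1, i2, i3⟩ :=
    Algebra.IsSmoothAt.exists_isStandardEtale_mvPolynomial (R := R) (S := A) (p := P)
  have hle : Submonoid.powers f ≤ P.primeCompl := by
    rw [Submonoid.powers_le]; exact hf
  let _ : Algebra (Localization.Away f) L :=
    IsLocalization.localizationAlgebraOfSubmonoidLe _ _ (Submonoid.powers f) P.primeCompl hle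
  have : IsScalarTower A (Localization.Away f) L :=
    IsLocalization.localization_isScalarTower_of_submonoid_le _ _ (Submonoid.powers f) P.primeCompl hle
  have hloc := IsLocalization.isLocalization_of_submonoid_le (Localization.Away f) L
    (Submonoid.powers f) P.primeCompl hle
  let alg : Algebra (MvPolynomial (Fin n) R) L := ((algebraMap (Localization.Away f) L).comp
    (algebraMap (MvPolynomial (Fin n) R) (Localization.Away f))).toAlgebra
  have tw : IsScalarTower (MvPolynomial (Fin n) R) (Localization.Away f) L :=
    IsScalarTower.of_algebraMap_eq' rfl
  have : IsScalarTower R (Localization.Away f) L := IsScalarTower.of_algebraMap_eq' (by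
    rw [IsScalarTower.algebraMap_eq R A L, IsScalarTower.algebraMap_eq A (Localization.Away f) L,
      RingHom.comp_assoc, ← IsScalarTower.algebraMap_eq R A (Localization.Away f)])
  have : IsScalarTower R (MvPolynomial (Fin n) R) L := IsScalarTower.of_algebraMap_eq' (by
    rw [IsScalarTower.algebraMap_eq R (Localization.Away f) L,
      IsScalarTower.algebraMap_eq R (MvPolynomial (Fin n) R) (Localization.Away f), 
      ← RingHom.comp_assoc]
    rfl)
  have f1 : Module.Flat (Localization.Away f) L := IsLocalization.flat L (P.primeCompl.map (algebraMap A (Localization.Away f)))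
  have f2 : Algebra.EssFiniteType (Localization.Away f) L := Algebra.EssFiniteType.of_isLocalization L (P.primeCompl.map (algebraMap A (Localization.Away f)))
  have f3 : Algebra.FormallyUnramified (Localization.Away f) L := Algebra.FormallyUnramified.of_isLocalization (P.primeCompl.map (algebraMap A (Localization.Away f)))
  refine ⟨n, alg, inferInstance, Module.Flat.trans _ (Localization.Away f) _, 
    Algebra.FormallyUnramified.comp _ (Localization.Away f) _,
    Algebra.EssFiniteType.comp _ (Localization.Away f) _, ?_⟩
  intro B _ _
  exact TensorProduct.toIntegralClosure_bijective_of_tower (S := Localization.Away f)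
    TensorProduct.toIntegralClosure_bijective_of_smooth
    (TensorProduct.toIntegralClosure_bijective_of_isLocalization (P.primeCompl.map (algebraMap A (Localization.Away f))))

theorem exists_FDL (R A : Type) [CommRing R] [CommRing A] [Algebra R A] [Algebra.Smooth R A]
    (P : Ideal A) [P.IsPrime] (L : Type) [CommRing L] [Algebra A L] [Algebra R L]
    [IsScalarTower R A L] [IsLocalization.AtPrime L P]
    (M : Type) [AddCommGroup M] [Module L M] [Module R M] [IsScalarTower R L M]
    [Module.Flat R M] : ∃ n, FDL L n M := by
  obtain ⟨n, i1, i2, i3, i4, i5, -⟩ := exists_coords R A P L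
  refine ⟨n, ?_⟩
  let _ : Module (MvPolynomial (Fin n) R) M := Module.compHom M (algebraMap _ L)
  have : IsScalarTower (MvPolynomial (Fin n) R) L M :=
    ⟨fun x y z => by rw [Algebra.smul_def, mul_smul]; rfl⟩
  have : IsScalarTower R (MvPolynomial (Fin n) R) M := 
    IsScalarTower.of_algebraMap_smul fun r x => by
      rw [← algebraMap_smul L (algebraMap R _ r), ← IsScalarTower.algebraMap_apply, algebraMap_smul]
  exact FDL_of_unramified _ L n M (FDL_mvPoly R n M)

theorem isField_of_idem (E : Type) [CommRing E] [Nontrivial E] [IsArtinianRing E] [IsReduced E]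
    (hidem : ∀ e : E, e * e = e → e = 0 ∨ e = 1) : IsField E := by
  refine ⟨exists_pair_ne E, mul_comm, fun {x} hx => ?_⟩
  obtain ⟨n, y, hy⟩ := IsArtinian.exists_pow_succ_smul_dvd x (1 : E)
  simp only [smul_eq_mul, mul_one] at hy
  have h1 : ∀ j, x ^ (n + j) * y ^ j = x ^ n := by
    intro j
    induction j with
    | zero => simp
    | succ j ih => 
      calc x ^ (n + (j + 1)) * y ^ (j + 1) = (x ^ (n + 1) * y) * (x ^ j * y ^ j) := by ring
        _ = x ^ n := by rw [hy, ← mul_assoc, ← pow_add, ih]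
  have h2 := h1 n
  have he : (x ^ n * y ^ n) * (x ^ n * y ^ n) = x ^ n * y ^ n := by
    calc _ = (x ^ (n + n) * y ^ n) * y ^ n := by ring
      _ = _ := by rw [h2]
  rcases hidem _ he with h | h
  · exfalso
    have : x ^ n = 0 := by
      calc x ^ n = x ^ (n + n) * y ^ n := h2.symm
        _ = x ^ n * (x ^ n * y ^ n) := by ring
        _ = 0 := by rw [h, mul_zero]
    exact hx (IsReduced.eq_zero x ⟨n, this⟩)
  · rcases n with _ | n
    · exact ⟨y, by simpa using hy⟩
    · exact ⟨x ^ n * y ^ (n + 1), by rw [← h]; ring⟩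

theorem isIntegral_of_idem (L E : Type) [CommRing L] [CommRing E] [Algebra L E] (e : E)
    (he : e * e = e) : IsIntegral L e :=
  ⟨Polynomial.X * (Polynomial.X - 1), 
    Polynomial.monic_X.mul (by simpa using Polynomial.monic_X_sub_C (1 : L)),
    by simp [mul_sub, he]⟩

theorem isDomain_aux (P0 K L : Type) [CommRing P0] [IsDomain P0] [IsIntegrallyClosed P0]
    [Field K] [Algebra P0 K] [IsFractionRing P0 K] [CommRing L] [IsLocalRing L] [Algebra P0 L]
    [Module.Flat P0 L] [Algebra.FormallyUnramified P0 L] [Algebra.EssFiniteType P0 L]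
    (H : Function.Bijective (TensorProduct.toIntegralClosure P0 L K)) : IsDomain L := by
  let _ : Algebra K (L ⊗[P0] K) := Algebra.TensorProduct.rightAlgebra
  have hinj : Function.Injective (algebraMap L (L ⊗[P0] K)) :=
    Algebra.TensorProduct.includeLeft_injective (R := P0) (S := P0) (A := L) (B := K)
      (IsFractionRing.injective P0 K)
  have : Nontrivial (L ⊗[P0] K) := hinj.nontrivial
  let ee : K ⊗[P0] L ≃ₐ[K] (L ⊗[P0] K) := Algebra.TensorProduct.commRight P0 K L
  have : Algebra.FormallyUnramified K (L ⊗[P0] K) := Algebra.FormallyUnramified.of_equiv ee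
  have : Algebra.EssFiniteType K (L ⊗[P0] K) := (Algebra.EssFiniteType.iff_of_algEquiv ee).1 inferInstance
  have : Module.Finite K (L ⊗[P0] K) := Algebra.FormallyUnramified.finite_of_free K (L ⊗[P0] K)
  have : IsReduced (L ⊗[P0] K) := Algebra.FormallyUnramified.isReduced_of_field K (L ⊗[P0] K)
  have : IsArtinianRing (L ⊗[P0] K) := IsArtinianRing.of_finite K (L ⊗[P0] K)
  have hz' : ∀ z : L ⊗[P0] integralClosure P0 K, ∃ l : L, algebraMap L (L ⊗[P0] K) l = 
      Algebra.TensorProduct.map (.id L L) (integralClosure P0 K).val z := by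
    intro z
    induction z with
    | zero => exact ⟨0, by simp⟩
    | add x y hx hy =>
      obtain ⟨a, ha⟩ := hx
      obtain ⟨b, hb⟩ := hy
      exact ⟨a + b, by rw [map_add, map_add, ha, hb]⟩
    | tmul x y =>
      obtain ⟨a, ha⟩ := IsIntegrallyClosed.isIntegral_iff.1 y.2
      refine ⟨a • x, ?_⟩
      rw [Algebra.TensorProduct.map_tmul]
      change (a • x) ⊗ₜ[P0] (1 : K) = x ⊗ₜ[P0] (y : K)
      rw [← ha, Algebra.algebraMap_eq_smul_one, TensorProduct.smul_tmul]
  have hrange : ∀ e : L ⊗[P0] K, IsIntegral L e → ∃ l : L, algebraMap L (L ⊗[P0] K) l = e := by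
    intro e he
    obtain ⟨z, hz⟩ := H.2 ⟨e, he⟩
    obtain ⟨l, hl⟩ := hz' z
    exact ⟨l, hl.trans (congrArg Subtype.val hz)⟩
  have hidem : ∀ e : L ⊗[P0] K, e * e = e → e = 0 ∨ e = 1 := by
    intro e he
    obtain ⟨l, rfl⟩ := hrange e (isIntegral_of_idem L _ e he)
    rw [← map_mul] at he
    have he := hinj he
    rcases IsLocalRing.isUnit_or_isUnit_one_sub_self l with h | h
    · right
      have : l = 1 := h.mul_left_cancel (by rw [he, mul_one])
      rw [this, map_one]
    · left
      have : l = 0 := h.mul_left_cancel (by rw [sub_mul, one_mul, he, mul_zero, sub_self])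
      rw [this, map_zero]
  have := (isField_of_idem _ hidem).isDomain
  exact hinj.isDomain (algebraMap L (L ⊗[P0] K))

/-- smooth over a field: local rings are domains -/
theorem isDomain_of_smooth_field (k A : Type) [Field k] [CommRing A] [Algebra k A] [Algebra.Smooth k A]
    (P : Ideal A) [P.IsPrime] (L : Type) [CommRing L] [Algebra A L] 
    [IsLocalization.AtPrime L P] : IsDomain L := by
  let _ : Algebra k L := ((algebraMap A L).comp (algebraMap k A)).toAlgebra
  have : IsScalarTower k A L := IsScalarTower.of_algebraMap_eq' rfl
  have : IsLocalRing L := IsLocalization.AtPrime.isLocalRing L P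
  obtain ⟨n, i1, i2, i3, i4, i5, H⟩ := exists_coords k A P L
  exact isDomain_aux (MvPolynomial (Fin n) k) (FractionRing (MvPolynomial (Fin n) k)) L (H _)

theorem isReduced_of_smooth_field (k A : Type) [Field k] [CommRing A] [Algebra k A]
    [Algebra.Smooth k A] : IsReduced A := by
  refine isReduced_ofLocalizationMaximal A fun P hP => ?_
  have := isDomain_of_smooth_field k A P (Localization.AtPrime P)
  infer_instance

end InvFlat
end

section
open TensorProduct

set_option linter.unusedVariables false
namespace InvFlat

theorem one_tmul_eq_zero {R M : Type} [CommRing R] [AddCommGroup M] [Module R M] (I : Ideal R)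
    (m : M) : (1 : R ⧸ I) ⊗ₜ[R] m = 0 ↔ m ∈ (I • ⊤ : Submodule R M) := by
  rw [← (TensorProduct.quotTensorEquivQuotSMul M I).map_eq_zero_iff,
    TensorProduct.quotTensorEquivQuotSMul_mk_one_tmul, Submodule.Quotient.mk_eq_zero]

theorem exists_one_tmul {R M : Type} [CommRing R] [AddCommGroup M] [Module R M] (I : Ideal R)
    (x : (R ⧸ I) ⊗[R] M) : ∃ m : M, x = 1 ⊗ₜ m := by
  obtain ⟨m, hm⟩ := Submodule.Quotient.mk_surjective _ (TensorProduct.quotTensorEquivQuotSMul M I x)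
  refine ⟨m, (TensorProduct.quotTensorEquivQuotSMul M I).injective ?_⟩
  rw [← hm, TensorProduct.quotTensorEquivQuotSMul_mk_one_tmul]

theorem mem_map_smul_top {R B M : Type} [CommRing R] [CommRing B] [Algebra R B] [AddCommGroup M]
    [Module R M] [Module B M] [IsScalarTower R B M] (q : Ideal R) (m : M) :
    m ∈ ((q.map (algebraMap R B)) • ⊤ : Submodule B M) ↔ m ∈ (q • ⊤ : Submodule R M) := by
  constructor
  · intro h
    refine Submodule.smul_induction_on h ?_ (fun x y hx hy => Submodule.add_mem _ hx hy)
    intro b hb n _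
    induction hb using Submodule.span_induction generalizing n with
    | mem x h => 
      obtain ⟨r, hr, rfl⟩ := h
      rw [algebraMap_smul]
      exact Submodule.smul_mem_smul hr trivial
    | zero => simp
    | add x y _ _ hx hy => rw [add_smul]; exact Submodule.add_mem _ (hx n trivial) (hy n trivial)
    | smul a x _ hx => rw [smul_eq_mul, mul_comm, mul_smul]; exact hx _ trivial
  · intro h
    refine Submodule.smul_induction_on h ?_ (fun x y hx hy => Submodule.add_mem _ hx hy)
    intro r hr n _
    rw [← algebraMap_smul B r n]
    exact Submodule.smul_mem_smul (Ideal.mem_map_of_mem _ hr) trivial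

/-- finite free resolution of length `n` -/
def FFR (B : Type) [CommRing B] : ℕ → ∀ (M : Type) [AddCommGroup M] [Module B M], Prop
  | 0, M, _, _ => Module.Free B M ∧ Module.Finite B M
  | n + 1, M, _, _ => ∃ (K F : Type) (_ : AddCommGroup K) (_ : AddCommGroup F) (_ : Module B K)
      (_ : Module B F) (i : K →ₗ[B] F) (f : F →ₗ[B] M), Function.Injective i ∧ Function.Exact i f ∧
      Function.Surjective f ∧ Module.Free B F ∧ Module.Finite B F ∧ FFR B n K

theorem FFR_of_FDL (B : Type) [CommRing B] [IsLocalRing B] [IsNoetherianRing B] (n : ℕ) (M : Type)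
    [AddCommGroup M] [Module B M] [Module.Finite B M] (h : FDL B n M) : FFR B n M := by
  induction n generalizing M with
  | zero =>
    have : Module.Flat B M := h
    exact ⟨Module.free_of_flat_of_isLocalRing, inferInstance⟩
  | succ n ih =>
    obtain ⟨k, f, hf⟩ := Module.Finite.exists_fin' B M
    have := h (LinearMap.ker f) (Fin k → B) (LinearMap.ker f).subtype f
      (Submodule.subtype_injective _) (LinearMap.exact_subtype_ker_map f) hf inferInstance
    exact ⟨_, _, _, _, _, _, (LinearMap.ker f).subtype, f, 
      (Submodule.subtype_injective _), (LinearMap.exact_subtype_ker_map f), hf, inferInstance,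
      inferInstance, ih _ this⟩

theorem FFR_bc (B B' : Type) [CommRing B] [CommRing B'] [Algebra B B']
    (Φ : ∀ (M : Type) [AddCommGroup M] [Module B M], Prop)
    (hΦ : ∀ (K F M : Type) [AddCommGroup K] [AddCommGroup F] [AddCommGroup M]
      [Module B K] [Module B F] [Module B M] (i : K →ₗ[B] F) (f : F →ₗ[B] M), Function.Injective i →
      Function.Exact i f → Function.Surjective f → Module.Free B F → Φ M →
      Φ K ∧ Function.Injective (i.lTensor B')) (n : ℕ) (M : Type)
    [AddCommGroup M] [Module B M] (hM : Φ M) (h : FFR B n M) : FFR B' n (B' ⊗[B] M) := by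
  induction n generalizing M with
  | zero => 
    obtain ⟨_, _⟩ := h
    exact ⟨inferInstance, inferInstance⟩
  | succ n ih =>
    obtain ⟨K, F, _, _, _, _, i, f, hi, hex, hf, _, _, hK⟩ := h
    obtain ⟨h1, h2⟩ := hΦ K F M i f hi hex hf inferInstance hM
    exact ⟨B' ⊗[B] K, B' ⊗[B] F, _, _, _, _, i.baseChange B', f.baseChange B', h2,
      lTensor_exact B' hex hf, LinearMap.lTensor_surjective B' hf, inferInstance, inferInstance,
      ih K h1 hK⟩

theorem FFR_flat (B B' : Type) [CommRing B] [CommRing B'] [Algebra B B'] [Module.Flat B B']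
    (n : ℕ) (M : Type) [AddCommGroup M] [Module B M] (h : FFR B n M) : FFR B' n (B' ⊗[B] M) :=
  FFR_bc B B' (fun M _ _ => True) (fun K F M _ _ _ _ _ _ i f hi _ _ _ _ =>
    ⟨trivial, Module.Flat.lTensor_preserves_injective_linearMap i hi⟩) n M trivial h

theorem FFR_quot (R B : Type) [CommRing R] [CommRing B] [Algebra R B] [Module.Flat R B]
    (q : Ideal R) (n : ℕ) (M : Type) [AddCommGroup M] [Module B M] [Module R M]
    [IsScalarTower R B M] [Module.Flat R M] (h : FFR B n M) :
    FFR (B ⧸ q.map (algebraMap R B)) n ((B ⧸ q.map (algebraMap R B)) ⊗[B] M) := by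
  refine FFR_bc B (B ⧸ q.map (algebraMap R B)) (fun M _ _ => 
    @Module.Flat R M _ _ (Module.compHom M (algebraMap R B))) ?_ n M ?_ h
  · intro K F M _ _ _ _ _ _ i f hi hex hf hF hM
    let _ := Module.compHom K (algebraMap R B)
    let _ := Module.compHom F (algebraMap R B)
    let _ := Module.compHom M (algebraMap R B)
    have : IsScalarTower R B K := ⟨fun x y z => by rw [Algebra.smul_def, mul_smul]; rfl⟩
    have : IsScalarTower R B F := ⟨fun x y z => by rw [Algebra.smul_def, mul_smul]; rfl⟩
    have : IsScalarTower R B M := ⟨fun x y z => by rw [Algebra.smul_def, mul_smul]; rfl⟩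
    have : Module.Flat R F := Module.Flat.trans R B F
    refine ⟨flat_left (i.restrictScalars R) (f.restrictScalars R) hi hex hf, ?_⟩
    have hinj := LinearMap.lTensor_injective_of_exact_of_flat (f.restrictScalars R) hf 
      (i.restrictScalars R) hi hex (R ⧸ q)
    rw [injective_iff_map_eq_zero] at hinj ⊢
    intro x hx
    obtain ⟨k, rfl⟩ := exists_one_tmul _ x
    rw [LinearMap.lTensor_tmul, one_tmul_eq_zero, mem_map_smul_top, ← one_tmul_eq_zero] at hx
    rw [one_tmul_eq_zero, mem_map_smul_top, ← one_tmul_eq_zero]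
    exact hinj _ hx
  · convert! ‹Module.Flat R M› using 1
    ext r m
    exact algebraMap_smul B r m

theorem stablyFree_of_FFR (B : Type) [CommRing B] (n : ℕ) (M : Type) [AddCommGroup M] [Module B M]
    [Module.Projective B M] (h : FFR B n M) : Module.IsStablyFree B M := by
  induction n generalizing M with
  | zero => obtain ⟨_, _⟩ := h; infer_instance
  | succ n ih => 
    obtain ⟨K, F, _, _, _, _, i, f, hi, hex, hf, _, _, hK⟩ := h
    obtain ⟨g, hg⟩ := Module.projective_lifting_property f LinearMap.id hf
    obtain ⟨e, he⟩ := (hex.splitSurjectiveEquiv hi) ⟨g, hg⟩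
    have : Module.Projective B K := Module.Projective.of_split i 
      (LinearMap.fst B K M ∘ₗ e.toLinearMap) (by
        ext x
        have hx : i x = e.symm (x, 0) := congrArg (fun g => g x) he.1
        simp [hx])
    have : Module.Finite B K := Module.Finite.of_surjective (LinearMap.fst B K M ∘ₗ e.toLinearMap)
      (fun k => ⟨e.symm (k, 0), by simp⟩)
    have := ih K hK
    obtain ⟨N, _, _, _, _, _⟩ := Module.IsStablyFree.exist_free_prod B K
    have : Module.Free B (M × (K × N)) := Module.Free.of_equiv 
      ((e.prodCongr (LinearEquiv.refl B N)) ≪≫ₗ 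
        ((LinearEquiv.prodComm B K M).prodCongr (LinearEquiv.refl B N)) ≪≫ₗ LinearEquiv.prodAssoc B M K N)
    exact Module.IsStablyFree.of_free_prod B M (K × N)

theorem equiv_of_FFR_of_invertible (B : Type) [CommRing B] (n : ℕ) (M : Type) [AddCommGroup M] [Module B M]
    [Module.Invertible B M] (h : FFR B n M) : Nonempty (M ≃ₗ[B] B) := by
  have := stablyFree_of_FFR B n M h
  have := Module.free_of_isStablyFree_of_invertible B M
  exact Module.Invertible.free_iff_linearEquiv.1 this

end InvFlat
end

section
open TensorProduct

namespace InvFlat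

theorem inv_crit (B N : Type) [CommRing B] [AddCommGroup N] [Module B N]
    (h1 : ∀ (f : N →ₗ[B] B) (x y : N), f x • y = f y • x)
    (h2 : Ideal.span {b : B | ∃ (f : N →ₗ[B] B) (x : N), b = f x} = ⊤) :
    Module.Invertible B N := by
  have key : ∀ t u : Module.Dual B N ⊗[B] N,
      contractLeft B N u • t = contractLeft B N t • u := by
    intro t u
    induction t with
    | zero => simp
    | add t t' ht ht' => rw [smul_add, ht, ht', map_add, add_smul]
    | tmul g m =>
      induction u with
      | zero => simp
      | add t t' ht ht' => rw [smul_add, ← ht, ← ht', map_add, add_smul]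
      | tmul f n =>
        rw [contractLeft_apply, contractLeft_apply, ← TensorProduct.tmul_smul, h1,
          TensorProduct.tmul_smul, TensorProduct.smul_tmul', TensorProduct.smul_tmul']
        congr 1
        ext x
        simp only [LinearMap.smul_apply]
        rw [← map_smul, ← map_smul, h1]
        simp [mul_comm]
  have hs : ∃ u, contractLeft B N u = 1 := by
    have : Ideal.span {b : B | ∃ (f : N →ₗ[B] B) (x : N), b = f x} ≤
        LinearMap.range (contractLeft B N) := by
      rw [Ideal.span, Submodule.span_le]
      rintro _ ⟨f, x, rfl⟩
      exact ⟨f ⊗ₜ x, by simp⟩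
    exact this (h2 ▸ Submodule.mem_top)
  obtain ⟨u, hu⟩ := hs
  refine ⟨⟨fun t t' htt => ?_, fun b => ⟨b • u, by simp [hu]⟩⟩⟩
  have a := key t u
  have b := key t' u
  rw [hu, one_smul] at a b
  rw [a, b, htt]

theorem invertible_of_local (B N : Type) [CommRing B] [AddCommGroup N] [Module B N]
    [Module.FinitePresentation B N]
    (h : ∀ (P : Ideal B) [P.IsMaximal], 
      Nonempty (LocalizedModule P.primeCompl N ≃ₗ[Localization.AtPrime P] Localization.AtPrime P)) :
    Module.Invertible B N := by
  apply inv_crit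
  · intro f x y
    refine Module.eq_of_localization_maximal (fun (P : Ideal B) _ => LocalizedModule P.primeCompl N)
      (fun (P : Ideal B) _ => LocalizedModule.mkLinearMap P.primeCompl N) _ _ (fun P _ => ?_)
    obtain ⟨e⟩ := h P
    let mk := LocalizedModule.mkLinearMap P.primeCompl N
    let fP : LocalizedModule P.primeCompl N →ₗ[Localization.AtPrime P] Localization.AtPrime P :=
      IsLocalizedModule.mapExtendScalars P.primeCompl mk (Algebra.linearMap B (Localization.AtPrime P))
        (Localization.AtPrime P) f
    have hf : ∀ z, fP (mk z) = algebraMap B (Localization.AtPrime P) (f z) := fun z => by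
      exact IsLocalizedModule.map_apply P.primeCompl mk (Algebra.linearMap B (Localization.AtPrime P)) f z
    have hc : ∀ z, fP z = e z * fP (e.symm 1) := fun z => by
      rw [← smul_eq_mul, ← map_smul, ← map_smul, smul_eq_mul, mul_one, e.symm_apply_apply]
    apply e.injective
    rw [LinearMap.map_smul, LinearMap.map_smul]
    change e (f x • mk y) = e (f y • mk x)
    rw [← algebraMap_smul (Localization.AtPrime P) (f x), ← algebraMap_smul (Localization.AtPrime P) (f y),
      ← hf, ← hf, map_smul, map_smul, hc, hc (mk y), smul_eq_mul, smul_eq_mul]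
    ring
  · by_contra hne
    obtain ⟨P, hP, hle⟩ := Ideal.exists_le_maximal _ hne
    obtain ⟨e⟩ := h P
    let mk := LocalizedModule.mkLinearMap P.primeCompl N
    obtain ⟨f, s, hfs⟩ := Module.FinitePresentation.exists_lift_of_isLocalizedModule P.primeCompl
      (Algebra.linearMap B (Localization.AtPrime P)) ((e.toLinearMap.restrictScalars B) ∘ₗ mk)
    obtain ⟨⟨n, t⟩, hn⟩ := IsLocalizedModule.surj P.primeCompl mk (e.symm 1)
    have h3 : e (mk n) = algebraMap B _ t := by
      rw [← hn]
      change e ((t : B) • e.symm 1) = _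
      rw [← algebraMap_smul (Localization.AtPrime P) (t : B), map_smul, e.apply_symm_apply, smul_eq_mul, mul_one]
    have h4 : algebraMap B (Localization.AtPrime P) (f n) = algebraMap B _ (s * t) := by
      have := congrArg (fun g => g n) hfs
      simp only [LinearMap.comp_apply, Algebra.linearMap_apply, LinearMap.smul_apply] at this
      rw [this]
      change (s : B) • e (mk n) = _
      rw [h3, map_mul, ← smul_eq_mul, algebraMap_smul]
    have h5 : IsUnit (algebraMap B (Localization.AtPrime P) (f n)) := by
      rw [h4]; exact IsLocalization.map_units (M := P.primeCompl) _ (s * t)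
    exact (IsLocalization.AtPrime.isUnit_to_map_iff (Localization.AtPrime P) P _).1 h5
      (hle (Ideal.subset_span ⟨f, n, rfl⟩))

end InvFlat
end

section
open TensorProduct

set_option linter.unusedVariables false
namespace InvFlat

theorem D1_fl {R : Type} [CommRing R] [IsLocalRing R] {M M' : Type} [AddCommGroup M]
    [AddCommGroup M'] [Module R M] [Module R M'] [Module.Flat R M'] (g : M →ₗ[R] M')
    (h : ∀ x, g x ∈ (IsLocalRing.maximalIdeal R • ⊤ : Submodule R M') →
      x ∈ (IsLocalRing.maximalIdeal R • ⊤ : Submodule R M))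
    (N : Type) [AddCommGroup N] [Module R N] (hN : IsFiniteLength R N) :
    Function.Injective (g.lTensor N) := by
  induction hN with
  | @of_subsingleton N _ _ _ =>
    intro x y _
    exact Subsingleton.elim _ _
  | @of_simple_quotient N _ _ K hs hK ih =>
    have hq : Function.Injective (g.lTensor (N ⧸ K)) := by
      obtain ⟨I, hI, ⟨e⟩⟩ := isSimpleModule_iff_quot_maximal.1 hs
      have hIm : I = IsLocalRing.maximalIdeal R := IsLocalRing.eq_maximalIdeal hI
      subst hIm
      have h0 : Function.Injective (g.lTensor (R ⧸ IsLocalRing.maximalIdeal R)) := by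
        rw [injective_iff_map_eq_zero]
        intro x hx
        obtain ⟨k, rfl⟩ := exists_one_tmul _ x
        rw [LinearMap.lTensor_tmul, one_tmul_eq_zero] at hx
        rw [one_tmul_eq_zero]
        exact h _ hx
      have h1 : g.lTensor (N ⧸ K) = (e.symm.rTensor M').toLinearMap ∘ₗ
          g.lTensor (R ⧸ IsLocalRing.maximalIdeal R) ∘ₗ (e.rTensor M).toLinearMap := by
        ext x y
        simp
      rw [h1]
      exact (e.symm.rTensor M').injective.comp (h0.comp (e.rTensor M).injective)
    rw [injective_iff_map_eq_zero]
    intro x hx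
    have h2 : K.mkQ.rTensor M x = 0 := by
      apply hq
      rw [map_zero, ← LinearMap.comp_apply, LinearMap.lTensor_comp_rTensor, 
        ← LinearMap.rTensor_comp_lTensor, LinearMap.comp_apply, hx, map_zero]
    obtain ⟨y, rfl⟩ := (rTensor_exact M (f := K.subtype) (g := K.mkQ) (LinearMap.exact_subtype_mkQ K)
      (Submodule.mkQ_surjective K) x).1 h2
    have h3 : g.lTensor K y = 0 := by
      apply Module.Flat.rTensor_preserves_injective_linearMap (M := M') K.subtype 
        (Submodule.subtype_injective _)
      rw [map_zero, ← LinearMap.comp_apply, LinearMap.rTensor_comp_lTensor, 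
        ← LinearMap.lTensor_comp_rTensor, LinearMap.comp_apply, hx]
    rw [ih (h3.trans (map_zero _).symm), map_zero]

theorem isFiniteLength_quot {R : Type} [CommRing R] [IsLocalRing R] [IsNoetherianRing R]
    (I : Ideal R) (k : ℕ) (h : IsLocalRing.maximalIdeal R ^ k ≤ I) : IsFiniteLength R (R ⧸ I) := by
  rw [isFiniteLength_iff_isNoetherian_isArtinian]
  refine ⟨inferInstance, ?_⟩
  by_cases hI : I = ⊤
  · subst hI
    infer_instance
  have : Nontrivial (R ⧸ I) := Ideal.Quotient.nontrivial_iff.2 hI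
  have : IsLocalRing (R ⧸ I) := 
    IsLocalRing.of_surjective' (Ideal.Quotient.mk I) Ideal.Quotient.mk_surjective
  have : IsArtinianRing (R ⧸ I) := by
    rw [isArtinianRing_iff_isNilpotent_maximalIdeal]
    refine ⟨k, ?_⟩
    have : IsLocalRing.maximalIdeal (R ⧸ I) = (IsLocalRing.maximalIdeal R).map (Ideal.Quotient.mk I) := by
      have h1 := ((IsLocalRing.local_hom_TFAE (Ideal.Quotient.mk I)).out 0 4).1 (IsLocalHom.of_surjective _ Ideal.Quotient.mk_surjective)
      rw [← h1, Ideal.map_comap_of_surjective _ Ideal.Quotient.mk_surjective]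
    rw [this, ← Ideal.map_pow, Ideal.zero_eq_bot, Ideal.map_eq_bot_iff_le_ker, Ideal.mk_ker]
    exact h
  exact isArtinian_of_surjective_algebraMap (R := R ⧸ I) Ideal.Quotient.mk_surjective

theorem D1 {R : Type} [CommRing R] [IsLocalRing R] [IsNoetherianRing R] {B : Type} [CommRing B]
    [IsLocalRing B] [IsNoetherianRing B] [Algebra R B] [IsLocalHom (algebraMap R B)] {M M' : Type} [AddCommGroup M]
    [AddCommGroup M'] [Module R M] [Module R M'] [Module B M] [IsScalarTower R B M] [Module.Finite B M]
    [Module.Flat R M'] (g : M →ₗ[R] M')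
    (h : ∀ x, g x ∈ (IsLocalRing.maximalIdeal R • ⊤ : Submodule R M') →
      x ∈ (IsLocalRing.maximalIdeal R • ⊤ : Submodule R M))
    (I : Ideal R) (x : M) (hx : g x ∈ (I • ⊤ : Submodule R M')) : x ∈ (I • ⊤ : Submodule R M) := by
  set m := IsLocalRing.maximalIdeal R with hm
  have h1 : ∀ k, x ∈ ((I ⊔ m ^ k) • ⊤ : Submodule R M) := by
    intro k
    have := D1_fl g h (R ⧸ (I ⊔ m ^ k)) (isFiniteLength_quot _ k le_sup_right)
    rw [← one_tmul_eq_zero]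
    apply this
    rw [LinearMap.lTensor_tmul, map_zero, one_tmul_eq_zero]
    exact Submodule.smul_mono_left le_sup_left hx
  rw [← mem_map_smul_top (B := B)]
  rw [← Submodule.Quotient.mk_eq_zero]
  have hne : m.map (algebraMap R B) ≠ ⊤ := by
    have := ((IsLocalRing.local_hom_TFAE (algebraMap R B)).out 0 2).1 ‹_›
    intro h
    exact Ideal.IsMaximal.ne_top inferInstance (top_le_iff.1 (h ▸ this))
  have h2 := Ideal.iInf_pow_smul_eq_bot_of_isLocalRing 
    (M := M ⧸ ((I.map (algebraMap R B)) • ⊤ : Submodule B M)) (m.map (algebraMap R B)) hne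
  rw [← Submodule.mem_bot B, ← h2, Submodule.mem_iInf]
  intro k
  have h3 := h1 k
  rw [← mem_map_smul_top (B := B), Ideal.map_sup, Submodule.sup_smul, Ideal.map_pow] at h3
  obtain ⟨a, ha, b, hb, rfl⟩ := Submodule.mem_sup.1 h3
  rw [Submodule.Quotient.mk_add, (Submodule.Quotient.mk_eq_zero _).2 ha, zero_add]
  have := Submodule.mem_map_of_mem (f := ((I.map (algebraMap R B)) • ⊤ : Submodule B M).mkQ) hb
  rw [Submodule.map_smul''] at this
  exact Submodule.smul_mono le_rfl le_top this
end InvFlat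
end

section
open TensorProduct

set_option linter.unusedVariables false
namespace InvFlat

theorem inv_bc {B C D M : Type} [CommRing B] [CommRing C] [CommRing D] [Algebra B C] [Algebra B D]
    [AddCommGroup M] [Module B M] (g : C →ₐ[B] D) (h : Module.Invertible C (C ⊗[B] M)) :
    Module.Invertible D (D ⊗[B] M) := by
  let _ := g.toAlgebra
  have : IsScalarTower B C D := IsScalarTower.of_algebraMap_eq fun x => (g.commutes x).symm
  exact Module.Invertible.congr (AlgebraTensorModule.cancelBaseChange B C D D M)

theorem inv_unit {B D M : Type} [CommRing B] [CommRing D] [Algebra B D]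
    [AddCommGroup M] [Module B M] (r : B)
    (h : Module.Invertible (Localization.Away r) (Localization.Away r ⊗[B] M))
    (hr : IsUnit (algebraMap B D r)) : Module.Invertible D (D ⊗[B] M) :=
  inv_bc (IsLocalization.Away.liftAlgHom (A := B) (f := Algebra.ofId B D) r hr) h

theorem equiv_of_inv_local {B M : Type} [CommRing B] [IsLocalRing B] [AddCommGroup M] [Module B M]
    (h : Module.Invertible B M) : Nonempty (M ≃ₗ[B] B) :=
  Module.Invertible.free_iff_linearEquiv.1 inferInstance

theorem inv_of_local_bc {B C M : Type} [CommRing B] [CommRing C] [Algebra B C] [AddCommGroup M] [Module B M] 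
    [Module.FinitePresentation B M]
    (h : ∀ (P : Ideal C) [P.IsMaximal], 
      Module.Invertible (Localization.AtPrime P) (Localization.AtPrime P ⊗[B] M)) :
    Module.Invertible C (C ⊗[B] M) := by
  apply invertible_of_local
  intro P _
  obtain ⟨e⟩ := equiv_of_inv_local (h P)
  exact ⟨(IsLocalizedModule.isBaseChange P.primeCompl (Localization.AtPrime P) 
    (LocalizedModule.mkLinearMap P.primeCompl (C ⊗[B] M))).equiv.symm ≪≫ₗ 
    AlgebraTensorModule.cancelBaseChange B C (Localization.AtPrime P) (Localization.AtPrime P) M ≪≫ₗ e⟩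

theorem inv_of_cover {B C M : Type} [CommRing B] [CommRing C] [Algebra B C] [AddCommGroup M] [Module B M] 
    [Module.FinitePresentation B M] (r d : B)
    (hr : Module.Invertible (Localization.Away r) (Localization.Away r ⊗[B] M))
    (hd : Module.Invertible (Localization.Away d) (Localization.Away d ⊗[B] M))
    (x y : C) (hxy : IsUnit (r • x + d • y)) : 
    Module.Invertible C (C ⊗[B] M) := by
  apply inv_of_local_bc
  intro P _
  by_cases h1 : algebraMap B C r ∈ P
  · have h2 : algebraMap B C d ∉ P := by
      intro h2
      refine Ideal.IsMaximal.ne_top ‹_› (Ideal.eq_top_of_isUnit_mem P ?_ hxy)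
      rw [Algebra.smul_def, Algebra.smul_def]
      exact P.add_mem (P.mul_mem_right _ h1) (P.mul_mem_right _ h2)
    apply inv_unit d hd
    rw [IsScalarTower.algebraMap_apply B C]
    exact IsLocalization.map_units (M := P.primeCompl) (Localization.AtPrime P) ⟨_, h2⟩
  · apply inv_unit r hr
    rw [IsScalarTower.algebraMap_apply B C]
    exact IsLocalization.map_units (M := P.primeCompl) (Localization.AtPrime P) ⟨_, h1⟩

theorem good_comp {B C D M : Type} [CommRing B] [CommRing C] [CommRing D] [Algebra B C] [Algebra B D]
    [AddCommGroup M] [Module B M] (g : C →ₐ[B] D) (f : M →ₗ[B] C) (hf : IsBaseChange C f) :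
    IsBaseChange D (g.toLinearMap ∘ₗ f) := by
  let _ := g.toAlgebra
  have : IsScalarTower B C D := IsScalarTower.of_algebraMap_eq fun x => (g.commutes x).symm
  have h1 : IsBaseChange D (Algebra.linearMap C D) := IsBaseChange.linearMap C D
  have h2 := IsBaseChange.comp hf h1
  have h3 : g.toLinearMap ∘ₗ f = (Algebra.linearMap C D).restrictScalars B ∘ₗ f := by
    ext m
    rfl
  rw [h3]
  exact h2

theorem good_unit {B D M : Type} [CommRing B] [CommRing D] [Algebra B D]
    [AddCommGroup M] [Module B M] (f g : M →ₗ[B] D) (hf : IsBaseChange D f) (hg : IsBaseChange D g) :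
    ∃ u : D, IsUnit u ∧ ∀ m, g m = u * f m := by
  have key : ∀ f g : M →ₗ[B] D, ∀ (hf : IsBaseChange D f) (hg : IsBaseChange D g), ∀ m, 
    g m = ((hf.equiv.symm ≪≫ₗ hg.equiv) 1) * f m := by
    intro f g hf hg m
    have : (hf.equiv.symm ≪≫ₗ hg.equiv) (f m) = g m := by
      simp [hg.equiv_tmul]
    rw [← this]
    conv_lhs => rw [← mul_one (f m), ← smul_eq_mul, map_smul, smul_eq_mul, mul_comm]
  refine ⟨_, ?_, key f g hf hg⟩
  refine IsUnit.of_mul_eq_one ((hg.equiv.symm ≪≫ₗ hf.equiv) 1) ?_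
  rw [mul_comm, ← smul_eq_mul, ← map_smul, smul_eq_mul, mul_one]
  simp

theorem const_unit {S M : Type} [CommRing S] [IsReduced S] [AddCommGroup M] 
    (B : Type) [CommRing B] [Algebra B S] [Module B M] (f : M →ₗ[B] Polynomial S) 
    (hf : IsBaseChange (Polynomial S) f) (m : M) : (f m).eval 0 = (f m).eval 1 := by
  let g : M →ₗ[B] Polynomial S := ((IsScalarTower.toAlgHom B S (Polynomial S)).comp 
    ((Polynomial.aeval (0 : S)).restrictScalars B)).toLinearMap ∘ₗ f
  have hg : IsBaseChange (Polynomial S) g := good_comp _ _ hf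
  obtain ⟨u, hu, h⟩ := good_unit g f hg hf
  have hc : u = Polynomial.C (u.coeff 0) := by
    ext i
    by_cases hi : i = 0
    · subst hi; simp
    · rw [((Polynomial.isUnit_iff_coeff_isUnit_isNilpotent.1 hu).2 i hi).eq_zero, 
        Polynomial.coeff_C_of_ne_zero hi]
  have hgm : g m = Polynomial.C ((f m).eval 0) := by
    simp [g, Polynomial.aeval_def]
  have h1 := h m
  rw [hgm, hc] at h1
  rw [h1]; simp

end InvFlat
end

section
open TensorProduct

set_option linter.unusedVariables false
namespace InvFlat

theorem exists_univ {B M : Type} [CommRing B] [AddCommGroup M] [Module B M] 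
    [Module.FinitePresentation B M] (n : ℕ) (hM : FFR B n M) (r d : B)
    (hr : Module.Invertible (Localization.Away r) (Localization.Away r ⊗[B] M))
    (hd : Module.Invertible (Localization.Away d) (Localization.Away d ⊗[B] M)) :
    ∃ (C : Type) (_ : CommRing C) (_ : Algebra B C) (X Y : C) (β : M →ₗ[B] C), IsBaseChange C β ∧
      (∀ (D : Type) [CommRing D] [Algebra B D] (x y : D), IsUnit (r • x + d • y) → 
        ∃ g : C →ₐ[B] D, g X = x ∧ g Y = y) ∧
      (∀ (D : Type) [CommRing D] [Algebra B D] (g g' : C →ₐ[B] D), g X = g' X → g Y = g' Y → g = g') := by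
  let a : MvPolynomial (Fin 2) B := r • MvPolynomial.X 0 + d • MvPolynomial.X 1
  let C := Localization.Away a
  let X : C := algebraMap (MvPolynomial (Fin 2) B) C (MvPolynomial.X 0)
  let Y : C := algebraMap (MvPolynomial (Fin 2) B) C (MvPolynomial.X 1)
  have hXY : IsUnit (r • X + d • Y) := by
    have : r • X + d • Y = algebraMap (MvPolynomial (Fin 2) B) C a := by
      simp only [X, Y, a, map_add, Algebra.smul_def, map_mul]
      rfl
    rw [this]
    exact IsLocalization.Away.algebraMap_isUnit a
  have : Module.Invertible C (C ⊗[B] M) := inv_of_cover r d hr hd X Y hXY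
  have : Module.Flat B C := Module.Flat.trans B (MvPolynomial (Fin 2) B) C
  obtain ⟨e⟩ := equiv_of_FFR_of_invertible C n (C ⊗[B] M) (FFR_flat B C n M hM)
  refine ⟨C, inferInstance, inferInstance, X, Y, 
    e.toLinearMap.restrictScalars B ∘ₗ (TensorProduct.mk B C M 1), 
    IsBaseChange.of_equiv e (fun x => rfl), ?_, ?_⟩
  · intro D _ _ x y hxy
    have hu : IsUnit (MvPolynomial.aeval (R := B) ![x, y] a) := by
      simpa [a] using hxy
    refine ⟨IsLocalization.Away.liftAlgHom (A := B) (f := MvPolynomial.aeval (R := B) ![x, y]) a hu, ?_, ?_⟩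
    · rw [IsLocalization.Away.liftAlgHom_apply]
      exact (IsLocalization.Away.lift_eq a hu _).trans (by simp)
    · rw [IsLocalization.Away.liftAlgHom_apply]
      exact (IsLocalization.Away.lift_eq a hu _).trans (by simp)
  · intro D _ _ g g' hX hY
    have h1 : g.comp (IsScalarTower.toAlgHom B (MvPolynomial (Fin 2) B) C) = 
        g'.comp (IsScalarTower.toAlgHom B (MvPolynomial (Fin 2) B) C) := by
      ext i
      fin_cases i
      · exact hX
      · exact hY
    apply AlgHom.coe_ringHom_injective
    apply IsLocalization.ringHom_ext (Submonoid.powers a)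
    exact congrArg (fun f : MvPolynomial (Fin 2) B →ₐ[B] D => (f : MvPolynomial (Fin 2) B →+* D)) h1

theorem glue {B M : Type} [CommRing B] [AddCommGroup M] [Module B M] 
    [Module.FinitePresentation B M] (n : ℕ) (hM : FFR B n M) (r d : B)
    (hr : Module.Invertible (Localization.Away r) (Localization.Away r ⊗[B] M))
    (hd : Module.Invertible (Localization.Away d) (Localization.Away d ⊗[B] M)) :
    ∃ (φ : M →ₗ[B] Localization.Away r) (ψ : M →ₗ[B] Localization.Away d), 
      IsBaseChange (Localization.Away r) φ ∧ IsBaseChange (Localization.Away d) ψ ∧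
      ∀ (T : Type) [CommRing T] [Algebra B T] [IsReduced T] (f : Localization.Away r →ₐ[B] T)
        (g : Localization.Away d →ₐ[B] T) (m : M), f (φ m) = g (ψ m) := by
  obtain ⟨C, _, _, X, Y, β, hβ, hex, hext⟩ := exists_univ n hM r d hr hd
  obtain ⟨ri, hri⟩ := (IsLocalization.Away.algebraMap_isUnit (S := Localization.Away r) r).exists_right_inv
  obtain ⟨di, hdi⟩ := (IsLocalization.Away.algebraMap_isUnit (S := Localization.Away d) d).exists_right_inv
  rw [← Algebra.smul_def] at hri hdi
  obtain ⟨gr, hr1, hr2⟩ := hex _ ri 0 (by rw [hri]; simp)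
  obtain ⟨gd, hd1, hd2⟩ := hex _ 0 di (by rw [hdi]; simp)
  refine ⟨gr.toLinearMap ∘ₗ β, gd.toLinearMap ∘ₗ β, good_comp _ _ hβ, good_comp _ _ hβ, ?_⟩
  intro T _ _ _ f g m
  have hri' : r • f ri = 1 := by rw [← map_smul, hri, map_one]
  have hdi' : d • g di = 1 := by rw [← map_smul, hdi, map_one]
  obtain ⟨gw, hw1, hw2⟩ := hex (Polynomial T) ((1 - Polynomial.X) * Polynomial.C (f ri)) 
    (Polynomial.X * Polynomial.C (g di)) (by
      rw [← mul_smul_comm, ← mul_smul_comm, Polynomial.smul_C, Polynomial.smul_C, hri', hdi']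
      simp)
  have h0 := const_unit B (gw.toLinearMap ∘ₗ β) (good_comp _ _ hβ) m
  have e0 : ((Polynomial.aeval (0 : T)).restrictScalars B).comp gw = f.comp gr := by
    apply hext
    · simp [hw1, hr1]
    · simp [hw2, hr2]
  have e1 : ((Polynomial.aeval (1 : T)).restrictScalars B).comp gw = g.comp gd := by
    apply hext
    · simp [hw1, hd1]
    · simp [hw2, hd2]
  have e0' := congrArg (fun f => f (β m)) e0
  have e1' := congrArg (fun f => f (β m)) e1
  simp only [AlgHom.comp_apply, AlgHom.restrictScalars_apply, Polynomial.coe_aeval_eq_eval] at e0' e1'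
  simp only [LinearMap.comp_apply, AlgHom.toLinearMap_apply] at h0 ⊢
  rw [← e0', ← e1', h0]
end InvFlat
end

section
open TensorProduct

set_option linter.unusedVariables false
namespace InvFlat

theorem flat_bc (R B L M : Type) [CommRing R] [CommRing B] [CommRing L] [Algebra R B] [Algebra B L]
    [Algebra R L] [IsScalarTower R B L] [AddCommGroup M] [Module R M] [Module B M] [IsScalarTower R B M]
    [Module.Flat B L] [Module.Flat R M] : Module.Flat R (L ⊗[B] M) := by
  rw [Module.Flat.iff_lTensor_preserves_injective_linearMap]
  intro N N' _ _ _ _ i hi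
  have h1 := Module.Flat.lTensor_preserves_injective_linearMap (M := M) i hi
  have h2 := Module.Flat.lTensor_preserves_injective_linearMap (M := L) 
    (AlgebraTensorModule.lTensor B M i) h1
  have h3 : ∀ x, AlgebraTensorModule.assoc R B B L M N' (i.lTensor (L ⊗[B] M) x) = 
    (AlgebraTensorModule.lTensor B M i).lTensor L (AlgebraTensorModule.assoc R B B L M N x) := by
    intro x
    induction x with
    | zero => simp
    | add x y hx hy => simp only [map_add, hx, hy]
    | tmul x n =>
      induction x with
      | zero => simp
      | add x y hx hy => simp only [map_add, add_tmul, hx, hy]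
      | tmul l m => simp
  intro x y hxy
  apply (AlgebraTensorModule.assoc R B B L M N).injective
  apply h2
  rw [← h3, ← h3, hxy]

theorem flat_loc (R B L M N : Type) [CommRing R] [CommRing B] [CommRing L] [Algebra R B] [Algebra B L]
    [Algebra R L] [IsScalarTower R B L] [AddCommGroup M] [Module R M] [Module B M] [IsScalarTower R B M]
    [AddCommGroup N] [Module B N] [Module L N] [IsScalarTower B L N] [Module R N] [IsScalarTower R L N]
    (S : Submonoid B) [IsLocalization S L]
    (f : M →ₗ[B] N) [IsLocalizedModule S f] [Module.Flat R M] : Module.Flat R N := by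
  have : Module.Flat B L := IsLocalization.flat L S
  have := flat_bc R B L M
  exact Module.Flat.of_linearEquiv ((IsLocalizedModule.isBaseChange S L f).equiv.restrictScalars R).symm

theorem free_of_fib (R L N : Type) [CommRing R] [IsLocalRing R] [CommRing L] [IsLocalRing L] 
    [IsNoetherianRing L] [Algebra R L] [AddCommGroup N]
    [Module R N] [Module L N] [IsScalarTower R L N] [Module.Flat R L] [Module.Flat R N] 
    [Module.Finite L N] (h : IsLocalRing.maximalIdeal L = (IsLocalRing.maximalIdeal R).map (algebraMap R L)) :
    Module.Free L N := by
  obtain ⟨k, f, hf⟩ := Module.Finite.exists_fin' L N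
  let i := (LinearMap.ker f).subtype
  have hi : Function.Injective i := Submodule.subtype_injective _
  have hex : Function.Exact i f := LinearMap.exact_subtype_ker_map f
  refine Module.free_of_lTensor_residueField_injective i f hf hex ?_
  have hinj := LinearMap.lTensor_injective_of_exact_of_flat (f.restrictScalars R) hf 
      (i.restrictScalars R) hi hex (R ⧸ IsLocalRing.maximalIdeal R)
  change Function.Injective (i.lTensor (L ⧸ IsLocalRing.maximalIdeal L))
  rw [h]
  rw [injective_iff_map_eq_zero] at hinj ⊢
  intro x hx
  obtain ⟨k, rfl⟩ := exists_one_tmul _ x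
  rw [LinearMap.lTensor_tmul, one_tmul_eq_zero, mem_map_smul_top, ← one_tmul_eq_zero] at hx
  rw [one_tmul_eq_zero, mem_map_smul_top, ← one_tmul_eq_zero]
  exact hinj _ hx

theorem equiv_of_free_of_bc (L D N : Type) [CommRing L] [Nontrivial L] [CommRing D] [Nontrivial D] [Algebra L D]
    [AddCommGroup N] [Module L N] [Module.Free L N] [Module.Finite L N] 
    (h : Module.Invertible D (D ⊗[L] N)) : Nonempty (N ≃ₗ[L] L) := by
  obtain ⟨e⟩ := Module.Invertible.free_iff_linearEquiv.1 (inferInstance : Module.Free D (D ⊗[L] N))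
  apply FiniteDimensional.nonempty_linearEquiv_of_finrank_eq
  rw [← Module.finrank_baseChange (R := D), e.finrank_eq, Module.finrank_self, Module.finrank_self]

theorem S1 (R B M : Type) [CommRing R] [IsLocalRing R] [IsDomain R] [CommRing B] 
    [IsNoetherianRing B] [Algebra R B] [Module.Flat R B] [AddCommGroup M]
    [Module R M] [Module B M] [IsScalarTower R B M] [Module.Flat R M] [Module.Finite B M]
    [hξ : ((IsLocalRing.maximalIdeal R).map (algebraMap R B)).IsPrime] (r : R) (hr0 : r ≠ 0)
    (hr : Module.Invertible (Localization.Away (algebraMap R B r)) 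
      (Localization.Away (algebraMap R B r) ⊗[B] M)) : 
    ∃ d ∉ (IsLocalRing.maximalIdeal R).map (algebraMap R B), 
      Module.Invertible (Localization.Away d) (Localization.Away d ⊗[B] M) := by
  let ξ := (IsLocalRing.maximalIdeal R).map (algebraMap R B)
  let L := Localization.AtPrime ξ
  have : Module.Flat R (L ⊗[B] M) := flat_bc R B L M
  have : Module.Flat R L := Module.Flat.trans R B L
  have hfree : Module.Free L (L ⊗[B] M) := free_of_fib R L (L ⊗[B] M) (by
    rw [← Localization.AtPrime.map_eq_maximalIdeal, Ideal.map_map, ← IsScalarTower.algebraMap_eq])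
  let D := Localization.Away (algebraMap R L r)
  have hreg : algebraMap R L r ∈ nonZeroDivisors L := by
    have := Module.Flat.isSMulRegular_of_nonZeroDivisors (M := L) (mem_nonZeroDivisors_of_ne_zero hr0)
    rw [mem_nonZeroDivisors_iff_right]
    intro x hx
    apply this
    simp only [smul_zero]
    rw [Algebra.smul_def, mul_comm, hx]
  have : Nontrivial D := (IsLocalization.injective D 
    (M := Submonoid.powers (algebraMap R L r)) (by rwa [Submonoid.powers_le])).nontrivial
  have hinvD : Module.Invertible D (D ⊗[B] M) := inv_unit _ hr (by
    rw [← IsScalarTower.algebraMap_apply R B D, IsScalarTower.algebraMap_apply R L D]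
    exact IsLocalization.Away.algebraMap_isUnit _)
  obtain ⟨e⟩ := equiv_of_free_of_bc L D (L ⊗[B] M) 
    (Module.Invertible.congr (AlgebraTensorModule.cancelBaseChange B L D D M).symm)
  have hl1 : IsLocalizedModule ξ.primeCompl (TensorProduct.mk B L M 1) := 
    (isLocalizedModule_iff_isBaseChange ξ.primeCompl L _).2 (TensorProduct.isBaseChange B M L)
  have : Module.FinitePresentation B M := Module.finitePresentation_of_finite B M
  obtain ⟨d, hd, l', -⟩ := Module.FinitePresentation.exists_lift_equiv_of_isLocalizedModule ξ.primeCompl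
    (TensorProduct.mk B L M 1) (Algebra.linearMap B L) (e.restrictScalars B)
  refine ⟨d, hd, ?_⟩
  have e1 := (IsLocalizedModule.isBaseChange (Submonoid.powers d) (Localization.Away d) 
    (LocalizedModule.mkLinearMap (Submonoid.powers d) M)).equiv
  have e2 := (IsLocalizedModule.isBaseChange (Submonoid.powers d) (Localization.Away d) 
    (LocalizedModule.mkLinearMap (Submonoid.powers d) B)).equiv
  exact Module.Invertible.congr (e2 ≪≫ₗ l'.symm ≪≫ₗ e1.symm)
end InvFlat
end

section
open TensorProduct

set_option linter.unusedVariables false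
namespace InvFlat

theorem mem_smul_top_ring {R B : Type} [CommRing R] [CommRing B] [Algebra R B] (I : Ideal R) (b : B) :
    b ∈ (I • ⊤ : Submodule R B) ↔ b ∈ I.map (algebraMap R B) := by
  rw [Ideal.smul_top_eq_map]; rfl

theorem mem_span_smul_top {R M : Type} [CommRing R] [AddCommGroup M] [Module R M] (r : R) (x : M) : 
    x ∈ (Ideal.span {r} • ⊤ : Submodule R M) ↔ ∃ y, x = r • y := by
  rw [Submodule.ideal_span_singleton_smul, Submodule.mem_smul_pointwise_iff_exists]
  simp [eq_comm]

/-- sections over `D(r) ∪ D(d)` extend -/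
theorem exists_phi {B M : Type} [CommRing B] [IsReduced B] [AddCommGroup M] [Module B M] 
    [Module.FinitePresentation B M] (n : ℕ) (hM : FFR B n M) (r d : B)
    (hr : Module.Invertible (Localization.Away r) (Localization.Away r ⊗[B] M))
    (hd : Module.Invertible (Localization.Away d) (Localization.Away d ⊗[B] M))
    (hr0 : r ∈ nonZeroDivisors B) (hd0 : d ∈ nonZeroDivisors B) (hrM : ∀ x : M, r • x = 0 → x = 0)
    (hreg : ∀ n (b c : B), d * b = r ^ n * c → ∃ b', b = r ^ n * b') : 
    ∃ φ : M →ₗ[B] B, Function.Injective φ ∧ (∃ x k, φ x = r ^ k) ∧ (∃ x k, φ x = d ^ k) := by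
  obtain ⟨φr, φd, hφr, hφd, hcomp⟩ := glue n hM r d hr hd
  have l1 := (isLocalizedModule_iff_isBaseChange (Submonoid.powers r) (Localization.Away r) φr).2 hφr
  have l2 := (isLocalizedModule_iff_isBaseChange (Submonoid.powers d) (Localization.Away d) φd).2 hφd
  have hreg' : ∀ n k (b c : B), d ^ k * b = r ^ n * c → ∃ b', b = r ^ n * b' := by
    intro n k
    induction k with
    | zero => intro b c h; exact ⟨c, by simpa using h⟩
    | succ k ih =>
      intro b c h
      rw [pow_succ, mul_assoc] at h
      obtain ⟨b1, h1⟩ := ih _ _ h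
      exact hreg _ _ _ h1
  have hir : Function.Injective (algebraMap B (Localization.Away r)) := 
    IsLocalization.injective _ (M := Submonoid.powers r) (by rwa [Submonoid.powers_le])
  have hid : Function.Injective (algebraMap B (Localization.Away d)) := 
    IsLocalization.injective _ (M := Submonoid.powers d) (by rwa [Submonoid.powers_le])
  have hit : Function.Injective (algebraMap B (Localization.Away (r * d))) := 
    IsLocalization.injective _ (M := Submonoid.powers (r * d)) (by 
      rw [Submonoid.powers_le]; exact mul_mem hr0 hd0)
  have hut : IsUnit (algebraMap B (Localization.Away (r * d)) (r * d)) := 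
    IsLocalization.Away.algebraMap_isUnit _
  rw [map_mul] at hut
  have hut1 := isUnit_of_mul_isUnit_left hut
  have hut2 := isUnit_of_mul_isUnit_right hut
  have : IsReduced (Localization.Away (r * d)) := inferInstance
  have key : ∀ m, ∃ b : B, φr m = algebraMap _ _ b ∧ φd m = algebraMap _ _ b := by
    intro m
    obtain ⟨⟨b, ⟨_, k, rfl⟩⟩, hb⟩ := IsLocalization.surj (Submonoid.powers r) (φr m)
    obtain ⟨⟨c, ⟨_, l, rfl⟩⟩, hc⟩ := IsLocalization.surj (Submonoid.powers d) (φd m)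
    simp only at hb hc
    let f := IsLocalization.Away.liftAlgHom (A := B) (S := Localization.Away r) 
      (f := Algebra.ofId B (Localization.Away (r * d))) r hut1
    let g := IsLocalization.Away.liftAlgHom (A := B) (S := Localization.Away d) 
      (f := Algebra.ofId B (Localization.Away (r * d))) d hut2
    have h1 := hcomp _ f g m
    have hb' := congrArg f hb
    have hc' := congrArg g hc
    rw [map_mul, AlgHom.commutes, AlgHom.commutes] at hb' hc'
    have h2 : d ^ l * b = r ^ k * c := by
      apply hit
      rw [map_mul, map_mul, ← hb', ← hc', h1]
      ring
    obtain ⟨b', rfl⟩ := hreg' _ _ _ _ h2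
    have h3 : c = d ^ l * b' := by
      have : r ^ k ∈ nonZeroDivisors B := pow_mem hr0 k
      apply (mul_cancel_left_mem_nonZeroDivisors this).1
      rw [← h2]; ring
    refine ⟨b', ?_, ?_⟩
    · rw [map_mul, mul_comm] at hb
      exact (IsLocalization.map_units (M := Submonoid.powers r) _ ⟨r ^ k, k, rfl⟩).mul_left_cancel hb
    · rw [h3, map_mul, mul_comm] at hc
      exact (IsLocalization.map_units (M := Submonoid.powers d) _ ⟨d ^ l, l, rfl⟩).mul_left_cancel hc
  choose F hF1 hF2 using key
  let φ : M →ₗ[B] B := 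
    { toFun := F
      map_add' := fun x y => hir (by rw [map_add, ← hF1, ← hF1, ← hF1, map_add])
      map_smul' := fun b x => hir (by 
        rw [RingHom.id_apply, smul_eq_mul, map_mul, ← hF1, ← hF1, map_smul, Algebra.smul_def]) }
  have hrM' : ∀ k (x : M), r ^ k • x = 0 → x = 0 := by
    intro k
    induction k with
    | zero => intro x h; simpa using h
    | succ k ih => intro x h; rw [pow_succ, mul_smul] at h; exact hrM _ (ih _ h)
  refine ⟨φ, ?_, ?_, ?_⟩
  · rw [injective_iff_map_eq_zero]
    intro x hx
    have : φr x = 0 := by rw [hF1]; exact (congrArg _ hx).trans (map_zero _)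
    rw [IsLocalizedModule.eq_zero_iff (Submonoid.powers r)] at this
    obtain ⟨⟨_, k, rfl⟩, h⟩ := this
    exact hrM' k x h
  · obtain ⟨⟨x, ⟨_, k, rfl⟩⟩, h⟩ := IsLocalizedModule.surj (Submonoid.powers r) φr 1
    refine ⟨x, k, hir ?_⟩
    exact (hF1 x).symm.trans (h.symm.trans (by simp [Submonoid.smul_def, Algebra.smul_def]))
  · obtain ⟨⟨x, ⟨_, k, rfl⟩⟩, h⟩ := IsLocalizedModule.surj (Submonoid.powers d) φd 1
    refine ⟨x, k, hid ?_⟩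
    exact (hF2 x).symm.trans (h.symm.trans (by simp [Submonoid.smul_def, Algebra.smul_def]))

theorem CT (R B M : Type) [CommRing R] [IsLocalRing R] [IsNoetherianRing R] [IsDomain R] [CommRing B] 
    [IsLocalRing B] [IsNoetherianRing B] [IsReduced B] [Algebra R B] [IsLocalHom (algebraMap R B)]
    [Module.Flat R B] [AddCommGroup M]
    [Module R M] [Module B M] [IsScalarTower R B M] [Module.Flat R M] [Module.Finite B M]
    (hξ : ((IsLocalRing.maximalIdeal R).map (algebraMap R B)).IsPrime) (n : ℕ) (hM : FFR B n M)
    (r : R) (hr0 : r ≠ 0)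
    (hr : Module.Invertible (Localization.Away (algebraMap R B r)) 
      (Localization.Away (algebraMap R B r) ⊗[B] M))
    (hH : ∀ x0 : M, (∀ b : B, b • x0 ∈ (IsLocalRing.maximalIdeal R • ⊤ : Submodule R M) → 
        b ∈ (IsLocalRing.maximalIdeal R).map (algebraMap R B)) → 
      ∀ d ∉ (IsLocalRing.maximalIdeal R).map (algebraMap R B), ∀ x : M, 
        d • x ∈ (IsLocalRing.maximalIdeal R • ⊤ : Submodule R M) → 
        x ∈ (IsLocalRing.maximalIdeal R • ⊤ : Submodule R M)) : 
    Nonempty (M ≃ₗ[B] B) := by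
  obtain ⟨d, hd, hinvd⟩ := S1 R B M r hr0 hr
  have : Module.FinitePresentation B M := Module.finitePresentation_of_finite B M
  have hrB := Module.Flat.isSMulRegular_of_nonZeroDivisors (M := B) (mem_nonZeroDivisors_of_ne_zero hr0)
  have hrM := Module.Flat.isSMulRegular_of_nonZeroDivisors (M := M) (mem_nonZeroDivisors_of_ne_zero hr0)
  have hr0' : algebraMap R B r ∈ nonZeroDivisors B := by
    rw [mem_nonZeroDivisors_iff_right]
    intro x hx
    apply hrB
    simp only [smul_zero]
    rw [Algebra.smul_def, mul_comm, hx]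
  have hdreg := D1 (B := B) (R := R) (M := B) (M' := B) (LinearMap.mulLeft R d) (by
    intro x hx
    rw [mem_smul_top_ring] at hx ⊢
    exact (hξ.mem_or_mem hx).resolve_left hd)
  have hd0 : d ∈ nonZeroDivisors B := by
    rw [mem_nonZeroDivisors_iff_right]
    intro x hx
    have := hdreg ⊥ x (by simpa [mul_comm] using hx)
    simpa using this
  obtain ⟨φ, hinj, ⟨x1, k1, hx1⟩, ⟨x0, k0, hx0⟩⟩ := exists_phi n hM (algebraMap R B r) d hr hinvd hr0' hd0
    (fun x hx => hrM (by simpa using hx)) (by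
      intro n b c h
      have := hdreg (Ideal.span {r ^ n}) b (by
        rw [mem_span_smul_top]
        exact ⟨c, by simpa [Algebra.smul_def] using h⟩)
      rw [mem_span_smul_top] at this
      obtain ⟨y, hy⟩ := this
      exact ⟨y, by simpa [Algebra.smul_def] using hy⟩)
  have hmem : ∀ x ∈ (IsLocalRing.maximalIdeal R • ⊤ : Submodule R M), 
      φ x ∈ (IsLocalRing.maximalIdeal R).map (algebraMap R B) := by
    intro x hx
    have := Submodule.mem_map_of_mem (f := φ.restrictScalars R) hx
    rw [Submodule.map_smul''] at this
    rw [← mem_smul_top_ring]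
    exact Submodule.smul_mono le_rfl le_top this
  have hdk : ∀ k, d ^ k ∉ (IsLocalRing.maximalIdeal R).map (algebraMap R B) := fun k h => 
    hd (hξ.mem_of_pow_mem _ h)
  have hH' := hH x0 (by
    intro b hb
    have := hmem _ hb
    rw [map_smul, smul_eq_mul, hx0] at this
    exact (hξ.mem_or_mem this).resolve_right (hdk _))
  have hφ : ∀ x, φ x ∈ (IsLocalRing.maximalIdeal R • ⊤ : Submodule R B) →
      x ∈ (IsLocalRing.maximalIdeal R • ⊤ : Submodule R M) := by
    intro x hx
    apply hH' (d ^ k0) (hdk _)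
    have : d ^ k0 • x = φ x • x0 := by
      apply hinj
      rw [map_smul, map_smul, hx0, smul_eq_mul, smul_eq_mul, mul_comm]
    rw [this, ← mem_map_smul_top (B := B)]
    rw [mem_smul_top_ring] at hx
    exact Submodule.smul_mem_smul hx trivial
  have h1 := D1 (B := B) (φ.restrictScalars R) hφ (Ideal.span {r ^ k1}) x1 (by
    rw [mem_span_smul_top]
    exact ⟨1, by simpa [Algebra.smul_def] using hx1⟩)
  rw [mem_span_smul_top] at h1
  obtain ⟨y, rfl⟩ := h1
  have hy : φ y = 1 := by
    rw [← algebraMap_smul B, map_smul, smul_eq_mul, map_pow] at hx1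
    apply (mul_cancel_left_mem_nonZeroDivisors (pow_mem hr0' k1)).1
    rw [hx1, mul_one]
  exact ⟨LinearEquiv.ofBijective φ ⟨hinj, fun b => ⟨b • y, by rw [map_smul, hy, smul_eq_mul, mul_one]⟩⟩⟩
end InvFlat
end

section
open TensorProduct

set_option linter.unusedVariables false
namespace InvFlat

theorem bc_quot {R M N : Type} [CommRing R] (q : Ideal R) [AddCommGroup M] [AddCommGroup N] [Module R M]
    [Module R N] [Module (R ⧸ q) N] [IsScalarTower R (R ⧸ q) N] (f : M →ₗ[R] N) 
    (hs : Function.Surjective f) (hk : ∀ m, f m = 0 → m ∈ (q • ⊤ : Submodule R M)) : 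
    IsBaseChange (R ⧸ q) f := by
  let ℓ := (TensorProduct.isBaseChange R M (R ⧸ q)).lift f
  have hℓ : ∀ m, ℓ (1 ⊗ₜ m) = f m := fun m => (TensorProduct.isBaseChange R M (R ⧸ q)).lift_eq f m
  refine IsBaseChange.of_equiv (LinearEquiv.ofBijective ℓ ⟨?_, ?_⟩) hℓ
  · rw [injective_iff_map_eq_zero]
    intro x hx
    obtain ⟨m, rfl⟩ := exists_one_tmul _ x
    rw [hℓ] at hx
    rw [one_tmul_eq_zero]
    exact hk m hx
  · intro n
    obtain ⟨m, rfl⟩ := hs n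
    exact ⟨_, hℓ m⟩

theorem mem_bc_quot {R M N : Type} [CommRing R] (q : Ideal R) [AddCommGroup M] [AddCommGroup N] [Module R M]
    [Module R N] [Module (R ⧸ q) N] [IsScalarTower R (R ⧸ q) N] (f : M →ₗ[R] N) 
    (hs : Function.Surjective f) (hk : ∀ m, f m = 0 → m ∈ (q • ⊤ : Submodule R M)) 
    (I : Ideal R) (hI : q ≤ I) (x : M) : 
    f x ∈ (I.map (Ideal.Quotient.mk q) • ⊤ : Submodule (R ⧸ q) N) ↔ x ∈ (I • ⊤ : Submodule R M) := by
  have h1 := mem_map_smul_top (B := R ⧸ q) I (f x)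
  rw [Ideal.Quotient.algebraMap_eq] at h1
  rw [h1]
  have h2 : (I • ⊤ : Submodule R N) = (I • ⊤ : Submodule R M).map f := by
    rw [Submodule.map_smul'', Submodule.map_top, LinearMap.range_eq_top.2 hs]
  rw [h2]
  constructor
  · rintro ⟨y, hy, hxy⟩
    have := hk (x - y) (by rw [map_sub, hxy, sub_self])
    have := Submodule.add_mem _ (Submodule.smul_mono hI le_rfl this) hy
    simpa using this
  · exact Submodule.mem_map_of_mem

theorem lift_equiv (R B M : Type) [CommRing R] [CommRing B] [Algebra R B] [IsLocalRing B] [IsNoetherianRing B]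
    [Module.Flat R B] [AddCommGroup M] [Module R M] [Module B M] [IsScalarTower R B M] 
    [Module.Flat R M] [Module.Finite B M] (q : Ideal R) (hq : q.map (algebraMap R B) ≠ ⊤)
    (e : ((B ⧸ q.map (algebraMap R B)) ⊗[B] M) ≃ₗ[B ⧸ q.map (algebraMap R B)] (B ⧸ q.map (algebraMap R B))) : 
    Nonempty (M ≃ₗ[B] B) := by
  have hjac : q.map (algebraMap R B) ≤ Ideal.jacobson ⊥ := 
    (IsLocalRing.le_maximalIdeal hq).trans (IsLocalRing.jacobson_eq_maximalIdeal ⊥ bot_ne_top).ge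
  obtain ⟨m0, hm0⟩ := exists_one_tmul _ (e.symm 1)
  let ψ : B →ₗ[B] M := LinearMap.toSpanSingleton B M m0
  have hψ : Function.Surjective ψ := by
    rw [← LinearMap.range_eq_top]
    refine top_le_iff.1 (Submodule.le_of_le_smul_of_le_jacobson_bot (I := q.map (algebraMap R B)) 
      (Module.Finite.fg_top) hjac ?_)
    intro m _
    obtain ⟨b, hb⟩ := Ideal.Quotient.mk_surjective (e (1 ⊗ₜ m))
    have h1 : (1 : B ⧸ q.map (algebraMap R B)) ⊗ₜ[B] (m - ψ b) = 0 := by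
      apply e.injective
      rw [tmul_sub, map_sub, ← hb, map_zero]
      have : (1 : B ⧸ q.map (algebraMap R B)) ⊗ₜ[B] (ψ b) = 
          (Ideal.Quotient.mk (q.map (algebraMap R B)) b) • e.symm 1 := by
        rw [hm0, LinearMap.toSpanSingleton_apply, tmul_smul, ← Ideal.Quotient.algebraMap_eq, algebraMap_smul]
      rw [this, map_smul, LinearEquiv.apply_symm_apply, smul_eq_mul, mul_one, sub_self]
    rw [one_tmul_eq_zero] at h1
    have := Submodule.add_mem_sup (LinearMap.mem_range_self ψ b) h1
    simpa using this
  let i := (LinearMap.ker ψ).subtype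
  have hi : Function.Injective i := Submodule.subtype_injective _
  have hex : Function.Exact i ψ := LinearMap.exact_subtype_ker_map ψ
  have hinj := LinearMap.lTensor_injective_of_exact_of_flat (ψ.restrictScalars R) hψ 
      (i.restrictScalars R) hi hex (R ⧸ q)
  rw [injective_iff_map_eq_zero] at hinj
  have hK : (⊤ : Submodule B (LinearMap.ker ψ)) ≤ ⊥ := by
    refine Submodule.le_of_le_smul_of_le_jacobson_bot (I := q.map (algebraMap R B)) 
      (Module.Finite.fg_top) hjac ?_
    rw [bot_sup_eq]
    intro k _
    rw [mem_map_smul_top, ← one_tmul_eq_zero]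
    apply hinj
    rw [LinearMap.lTensor_tmul, one_tmul_eq_zero, mem_smul_top_ring]
    change (k : B) ∈ _
    rw [← Ideal.Quotient.eq_zero_iff_mem]
    have h1 : (k : B) • m0 = 0 := k.2
    have h2 : (Ideal.Quotient.mk (q.map (algebraMap R B)) k) • e.symm 1 = 0 := by
      rw [hm0, ← Ideal.Quotient.algebraMap_eq, algebraMap_smul, ← tmul_smul, h1, tmul_zero]
    have h3 := congrArg e h2
    rwa [map_smul, LinearEquiv.apply_symm_apply, smul_eq_mul, mul_one, map_zero] at h3
  refine ⟨(LinearEquiv.ofBijective ψ ⟨?_, hψ⟩).symm⟩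
  rw [injective_iff_map_eq_zero]
  intro b hb
  have := hK (x := ⟨b, hb⟩) trivial
  exact congrArg Subtype.val ((Submodule.mem_bot B).1 this)

theorem inv_tower {B C D M : Type} [CommRing B] [CommRing C] [CommRing D] [Algebra B C] [Algebra B D]
    [Algebra C D] [IsScalarTower B C D] [AddCommGroup M] [Module B M] 
    (h : Module.Invertible D (D ⊗[B] M)) : Module.Invertible D (D ⊗[C] (C ⊗[B] M)) :=
  Module.Invertible.congr (AlgebraTensorModule.cancelBaseChange B C D D M).symm

theorem T2 (R B M : Type) [CommRing R] [IsLocalRing R] [IsNoetherianRing R] [CommRing B] 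
    [IsLocalRing B] [IsNoetherianRing B] [Algebra R B] [IsLocalHom (algebraMap R B)]
    [Module.Flat R B] [AddCommGroup M]
    [Module R M] [Module B M] [IsScalarTower R B M] [Module.Flat R M] [Module.Finite B M]
    (hξ : ((IsLocalRing.maximalIdeal R).map (algebraMap R B)).IsPrime) (n : ℕ) (hM : FFR B n M)
    (q : Ideal R) [hq : q.IsPrime] (hred : IsReduced (B ⧸ q.map (algebraMap R B)))
    (r : R) (hr0 : r ∉ q)
    (hr : Module.Invertible (Localization.Away (algebraMap R B r)) 
      (Localization.Away (algebraMap R B r) ⊗[B] M))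
    (hH : ∀ x0 : M, (∀ b : B, b • x0 ∈ (IsLocalRing.maximalIdeal R • ⊤ : Submodule R M) → 
        b ∈ (IsLocalRing.maximalIdeal R).map (algebraMap R B)) → 
      ∀ d ∉ (IsLocalRing.maximalIdeal R).map (algebraMap R B), ∀ x : M, 
        d • x ∈ (IsLocalRing.maximalIdeal R • ⊤ : Submodule R M) → 
        x ∈ (IsLocalRing.maximalIdeal R • ⊤ : Submodule R M)) : 
    Nonempty (M ≃ₗ[B] B) := by
  have hqm : q ≤ IsLocalRing.maximalIdeal R := IsLocalRing.le_maximalIdeal hq.ne_top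
  have hqB : q.map (algebraMap R B) ≤ (IsLocalRing.maximalIdeal R).map (algebraMap R B) := Ideal.map_mono hqm
  have hqtop : q.map (algebraMap R B) ≠ ⊤ := fun h => hξ.ne_top (top_le_iff.1 (h ▸ hqB))
  have : Nontrivial (B ⧸ q.map (algebraMap R B)) := Ideal.Quotient.nontrivial_iff.2 hqtop
  have : IsLocalRing (R ⧸ q) := 
    IsLocalRing.of_surjective' (Ideal.Quotient.mk q) Ideal.Quotient.mk_surjective
  have : IsLocalRing (B ⧸ q.map (algebraMap R B)) := 
    IsLocalRing.of_surjective' (Ideal.Quotient.mk _) Ideal.Quotient.mk_surjective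
  have hmR : IsLocalRing.maximalIdeal (R ⧸ q) = (IsLocalRing.maximalIdeal R).map (Ideal.Quotient.mk q) := by
    have h1 := ((IsLocalRing.local_hom_TFAE (Ideal.Quotient.mk q)).out 0 4).1 
      (IsLocalHom.of_surjective _ Ideal.Quotient.mk_surjective)
    rw [← h1, Ideal.map_comap_of_surjective _ Ideal.Quotient.mk_surjective]
  have hξ' : (IsLocalRing.maximalIdeal (R ⧸ q)).map (algebraMap (R ⧸ q) (B ⧸ q.map (algebraMap R B))) = 
      ((IsLocalRing.maximalIdeal R).map (algebraMap R B)).map (Ideal.Quotient.mk _) := by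
    rw [hmR, Ideal.map_map, Ideal.map_map]
    rfl
  have hloc : IsLocalHom (algebraMap (R ⧸ q) (B ⧸ q.map (algebraMap R B))) := by
    constructor
    intro x hx
    obtain ⟨x, rfl⟩ := Ideal.Quotient.mk_surjective x
    have h1 : IsUnit (Ideal.Quotient.mk (q.map (algebraMap R B)) (algebraMap R B x)) := hx
    have h2 : IsLocalHom (Ideal.Quotient.mk (q.map (algebraMap R B))) := 
      IsLocalHom.of_surjective _ Ideal.Quotient.mk_surjective
    exact ((isUnit_of_map_unit (algebraMap R B) x (isUnit_of_map_unit _ _ h1))).map _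
  let fB : B →ₗ[R] (B ⧸ q.map (algebraMap R B)) := (Ideal.Quotient.mkₐ R (q.map (algebraMap R B))).toLinearMap
  have hfB := bc_quot q fB Ideal.Quotient.mk_surjective (by
    intro m hm
    rw [mem_smul_top_ring]
    exact Ideal.Quotient.eq_zero_iff_mem.1 hm)
  let fM : M →ₗ[R] ((B ⧸ q.map (algebraMap R B)) ⊗[B] M) := 
    (TensorProduct.mk B (B ⧸ q.map (algebraMap R B)) M 1).restrictScalars R
  have hfMs : Function.Surjective fM := fun x => by
    obtain ⟨m, rfl⟩ := exists_one_tmul _ x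
    exact ⟨m, rfl⟩
  have hfMk : ∀ m, fM m = 0 → m ∈ (q • ⊤ : Submodule R M) := by
    intro m hm
    rw [← mem_map_smul_top (B := B), ← one_tmul_eq_zero]
    exact hm
  have hfM := bc_quot q fM hfMs hfMk
  have : Module.Flat (R ⧸ q) (B ⧸ q.map (algebraMap R B)) := Module.Flat.isBaseChange R (R ⧸ q) B _ hfB
  have : Module.Flat (R ⧸ q) ((B ⧸ q.map (algebraMap R B)) ⊗[B] M) := 
    Module.Flat.isBaseChange R (R ⧸ q) M _ hfM
  have hmem : ∀ x, fM x ∈ (IsLocalRing.maximalIdeal (R ⧸ q) • ⊤ : 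
      Submodule (R ⧸ q) ((B ⧸ q.map (algebraMap R B)) ⊗[B] M)) ↔ 
      x ∈ (IsLocalRing.maximalIdeal R • ⊤ : Submodule R M) := by
    rw [hmR]
    exact mem_bc_quot q fM hfMs hfMk _ hqm
  have hsm : ∀ (b : B) x, Ideal.Quotient.mk (q.map (algebraMap R B)) b • fM x = fM (b • x) := by
    intro b x
    change _ • (1 ⊗ₜ x) = 1 ⊗ₜ (b • x)
    rw [← Ideal.Quotient.algebraMap_eq, algebraMap_smul, tmul_smul]
  have hCT := CT (R ⧸ q) (B ⧸ q.map (algebraMap R B)) ((B ⧸ q.map (algebraMap R B)) ⊗[B] M) 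
    (by rw [hξ']; exact Ideal.map_isPrime_of_surjective Ideal.Quotient.mk_surjective 
          (by rw [Ideal.mk_ker]; exact hqB)) n (FFR_quot R B q n M hM)
    (Ideal.Quotient.mk q r) (fun h => hr0 (Ideal.Quotient.eq_zero_iff_mem.1 h)) (by
      apply inv_tower
      apply inv_unit _ hr
      exact IsLocalization.Away.algebraMap_isUnit (algebraMap (R ⧸ q) (B ⧸ q.map (algebraMap R B)) (Ideal.Quotient.mk q r)))
    (by
      intro x0' hx0' d' hd' x' hx'
      obtain ⟨x0, rfl⟩ := hfMs x0'
      obtain ⟨x, rfl⟩ := hfMs x'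
      obtain ⟨d, rfl⟩ := Ideal.Quotient.mk_surjective d'
      rw [hξ', Ideal.mem_quotient_iff_mem hqB] at hd'
      rw [hsm, hmem] at hx'
      rw [hmem]
      refine hH x0 ?_ d hd' x hx'
      intro b hb
      have := hx0' (Ideal.Quotient.mk _ b) (by rw [hsm, hmem]; exact hb)
      rwa [hξ', Ideal.mem_quotient_iff_mem hqB] at this)
  obtain ⟨e⟩ := hCT
  exact lift_equiv R B M q hqtop e
end InvFlat
end

section
open TensorProduct

set_option linter.unusedVariables false
namespace InvFlat

theorem frac_tmul {R M : Type} [CommRing R] (p : Ideal R) [p.IsPrime] [AddCommGroup M] [Module R M]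
    (x : p.ResidueField ⊗[R] M) : ∃ s ∉ p, ∃ m, s • x = 1 ⊗ₜ[R] m := by
  induction x with
  | zero => exact ⟨1, p.one_notMem, 0, by simp⟩
  | add x y hx hy =>
    obtain ⟨s, hs, m, hm⟩ := hx
    obtain ⟨t, ht, n, hn⟩ := hy
    refine ⟨s * t, fun h => (Ideal.IsPrime.mem_or_mem ‹_› h).elim hs ht, t • m + s • n, ?_⟩
    rw [smul_add, mul_smul, mul_smul, hn, smul_comm s t x, hm, tmul_add, tmul_smul, tmul_smul]
  | tmul k m =>
    obtain ⟨⟨a, b⟩, h⟩ := IsLocalization.surj (nonZeroDivisors (R ⧸ p)) k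
    obtain ⟨b, hb⟩ := b
    obtain ⟨a, rfl⟩ := Ideal.Quotient.mk_surjective a
    obtain ⟨b, rfl⟩ := Ideal.Quotient.mk_surjective b
    refine ⟨b, fun h => nonZeroDivisors.ne_zero hb (Ideal.Quotient.eq_zero_iff_mem.2 h), a • m, ?_⟩
    have : b • k = a • (1 : p.ResidueField) := by
      rw [Algebra.smul_def, Algebra.smul_def, mul_one, mul_comm]
      exact h
    rw [smul_tmul', this, smul_tmul]

theorem res_tmul_zero {R M : Type} [CommRing R] (p : Ideal R) [p.IsPrime] [AddCommGroup M] [Module R M]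
    [Module.Flat R M] (m : M) : (1 : p.ResidueField) ⊗ₜ[R] m = 0 ↔ m ∈ (p • ⊤ : Submodule R M) := by
  let g : (R ⧸ p) →ₗ[R] p.ResidueField := (IsScalarTower.toAlgHom R (R ⧸ p) p.ResidueField).toLinearMap
  have hg : Function.Injective g := IsFractionRing.injective (R ⧸ p) p.ResidueField
  have h1 := Module.Flat.rTensor_preserves_injective_linearMap (M := M) g hg
  have h2 : g.rTensor M (1 ⊗ₜ m) = 1 ⊗ₜ m := by
    rw [LinearMap.rTensor_tmul]
    congr 1
    exact map_one (algebraMap (R ⧸ p) p.ResidueField)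
  rw [← one_tmul_eq_zero, ← h2, LinearMap.map_eq_zero_iff _ h1]

theorem mem_loc {A M N : Type} [CommRing A] [AddCommGroup M] [Module A M] [AddCommGroup N] [Module A N]
    (S : Submonoid A) (f : M →ₗ[A] N) [IsLocalizedModule S f] (I : Ideal A) (y : M) : 
    f y ∈ (I • ⊤ : Submodule A N) ↔ ∃ t ∈ S, t • y ∈ (I • ⊤ : Submodule A M) := by
  constructor
  · intro h
    have key : ∀ z ∈ (I • ⊤ : Submodule A N), ∃ t ∈ S, ∃ y ∈ (I • ⊤ : Submodule A M), t • z = f y := by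
      intro z hz
      refine Submodule.smul_induction_on hz ?_ ?_
      · intro i hi n _
        obtain ⟨⟨m, s⟩, hm⟩ := IsLocalizedModule.surj S f n
        refine ⟨s, s.2, i • m, Submodule.smul_mem_smul hi trivial, ?_⟩
        rw [map_smul, ← hm, smul_comm]; rfl
      · rintro x z ⟨s, hs, m, hm, h1⟩ ⟨t, ht, n, hn, h2⟩
        refine ⟨s * t, mul_mem hs ht, t • m + s • n, 
          Submodule.add_mem _ (Submodule.smul_mem _ _ hm) (Submodule.smul_mem _ _ hn), ?_⟩
        rw [smul_add, mul_smul, mul_smul, h2, smul_comm s t x, h1, map_add, map_smul, map_smul]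
    obtain ⟨t, ht, y', hy', h1⟩ := key _ h
    rw [← map_smul, IsLocalizedModule.eq_iff_exists S f] at h1
    obtain ⟨c, hc⟩ := h1
    refine ⟨c * t, mul_mem c.2 ht, ?_⟩
    rw [mul_smul]
    have : (c : A) • t • y = (c : A) • y' := hc
    rw [this]
    exact Submodule.smul_mem _ _ hy'
  · rintro ⟨t, ht, h⟩
    have h1 : f (t • y) ∈ (I • ⊤ : Submodule A N) := by
      have := Submodule.mem_map_of_mem (f := f) h
      rw [Submodule.map_smul''] at this
      exact Submodule.smul_mono le_rfl le_top this
    have hu := (Module.End.isUnit_iff _).1 (IsLocalizedModule.map_units f ⟨t, ht⟩)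
    have h2 : (I • ⊤ : Submodule A N) = (I • ⊤ : Submodule A N).map (algebraMap A (Module.End A N) t) := by
      rw [Submodule.map_smul'', Submodule.map_top, LinearMap.range_eq_top.2 hu.2]
    rw [h2] at h1
    obtain ⟨z, hz, h3⟩ := h1
    have : z = f y := hu.1 (by rw [map_smul] at h3; exact h3)
    exact this ▸ hz

theorem isRadical_map (R A : Type) [CommRing R] [CommRing A] [Algebra R A] [Algebra.Smooth R A] [Module.Flat R A]
    (q : Ideal R) [q.IsPrime] (a : A) (n : ℕ) (h : a ^ n ∈ q.map (algebraMap R A)) : 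
    a ∈ q.map (algebraMap R A) := by
  have := isReduced_of_smooth_field q.ResidueField (q.ResidueField ⊗[R] A)
  rw [← mem_smul_top_ring, ← res_tmul_zero] at h ⊢
  have h1 : ((1 : q.ResidueField) ⊗ₜ[R] a) ^ n = 0 := by
    rw [Algebra.TensorProduct.tmul_pow, one_pow, h]
  exact eq_zero_of_pow_eq_zero h1

theorem isPrime_map (R A L : Type) [CommRing R] [CommRing A] [Algebra R A] [Algebra.Smooth R A] [Module.Flat R A]
    (P : Ideal A) [P.IsPrime] [CommRing L] [Algebra A L] [Algebra R L] [IsScalarTower R A L] 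
    [IsLocalization.AtPrime L P] : ((P.under R).map (algebraMap R L)).IsPrime := by
  let p := P.under R
  let F := p.ResidueField ⊗[R] A
  let h0 : F →ₐ[R] P.ResidueField := Algebra.TensorProduct.productMap 
    (Ideal.ResidueField.mapₐ p P (Algebra.ofId R A) rfl) (IsScalarTower.toAlgHom R A P.ResidueField)
  let P' : Ideal F := RingHom.ker h0
  have hP'p : P'.IsPrime := RingHom.ker_isPrime _
  have h0a : ∀ a : A, (1 : p.ResidueField) ⊗ₜ[R] a ∈ P' ↔ a ∈ P := by
    intro a
    have e : h0 ((1 : p.ResidueField) ⊗ₜ[R] a) = algebraMap A P.ResidueField a := by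
      refine (Algebra.TensorProduct.productMap_apply_tmul _ _ _ _).trans ?_
      rw [map_one, one_mul]
      rfl
    rw [← Ideal.algebraMap_residueField_eq_zero (I := P), ← e]
    exact RingHom.mem_ker
  have hdom : IsDomain (Localization.AtPrime P') := isDomain_of_smooth_field p.ResidueField F P' _
  have hmem : ∀ a : A, algebraMap F (Localization.AtPrime P') ((1 : p.ResidueField) ⊗ₜ[R] a) = 0 ↔ 
      ∃ t ∈ P.primeCompl, t * a ∈ p.map (algebraMap R A) := by
    intro a
    rw [IsLocalization.map_eq_zero_iff P'.primeCompl]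
    constructor
    · rintro ⟨⟨v, hv⟩, hva⟩
      obtain ⟨s, hs, c, hc⟩ := frac_tmul p v
      have hsu : IsUnit (algebraMap R F s) := by
        rw [IsScalarTower.algebraMap_apply R p.ResidueField F]
        apply IsUnit.map
        rw [isUnit_iff_ne_zero]
        rwa [Ne, Ideal.algebraMap_residueField_eq_zero]
      refine ⟨c, fun hcP => ?_, ?_⟩
      · rw [SetLike.mem_coe, ← h0a, ← hc, Algebra.smul_def] at hcP
        rcases hP'p.mem_or_mem hcP with h | h
        · exact hP'p.ne_top (Ideal.eq_top_of_isUnit_mem _ h hsu)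
        · exact hv h
      · rw [← mem_smul_top_ring, ← res_tmul_zero]
        have : (1 : p.ResidueField) ⊗ₜ[R] (c * a) = (1 ⊗ₜ c) * (1 ⊗ₜ a) := by
          rw [Algebra.TensorProduct.tmul_mul_tmul, one_mul]
        rw [this, ← hc, smul_mul_assoc]
        exact (congrArg (s • ·) hva).trans (smul_zero s)
    · rintro ⟨t, ht, h⟩
      refine ⟨⟨1 ⊗ₜ t, fun h => ht ((h0a t).1 h)⟩, ?_⟩
      rw [← mem_smul_top_ring, ← res_tmul_zero] at h
      exact (Algebra.TensorProduct.tmul_mul_tmul _ _ _ _).trans (by rw [one_mul]; exact h)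
  have hL : ∀ a : A, algebraMap A L a ∈ p.map (algebraMap R L) ↔ 
      algebraMap F (Localization.AtPrime P') ((1 : p.ResidueField) ⊗ₜ[R] a) = 0 := by
    intro a
    rw [hmem, ← mem_smul_top_ring, ← mem_map_smul_top (B := A)]
    have := mem_loc P.primeCompl (Algebra.linearMap A L) (p.map (algebraMap R A)) a
    simp only [Ideal.smul_top_eq_map, smul_eq_mul, Ideal.mul_top, Algebra.linearMap_apply] at this ⊢
    exact this
  have hmul : ∀ a b : A, (1 : p.ResidueField) ⊗ₜ[R] (a * b) = (1 ⊗ₜ a) * (1 ⊗ₜ b) := by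
    intro a b
    rw [Algebra.TensorProduct.tmul_mul_tmul, one_mul]
  refine ⟨?_, ?_⟩
  · rw [Ne, Ideal.eq_top_iff_one, ← map_one (algebraMap A L), hL]
    intro h
    exact one_ne_zero ((map_one (algebraMap F (Localization.AtPrime P'))).symm.trans h)
  · intro x y hxy
    obtain ⟨⟨a, s⟩, hx⟩ := IsLocalization.surj P.primeCompl x
    obtain ⟨⟨b, t⟩, hy⟩ := IsLocalization.surj P.primeCompl y
    have us := IsLocalization.map_units L s
    have ut := IsLocalization.map_units L t
    have hab : algebraMap A L (a * b) ∈ p.map (algebraMap R L) := by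
      rw [map_mul, ← hx, ← hy, mul_mul_mul_comm]
      exact Ideal.mul_mem_right _ _ hxy
    have e1 : x ∈ p.map (algebraMap R L) ↔ algebraMap A L a ∈ p.map (algebraMap R L) := by
      rw [← hx]; exact (Ideal.mul_unit_mem_iff_mem _ us).symm
    have e2 : y ∈ p.map (algebraMap R L) ↔ algebraMap A L b ∈ p.map (algebraMap R L) := by
      rw [← hy]; exact (Ideal.mul_unit_mem_iff_mem _ ut).symm
    rw [hL, hmul, map_mul, mul_eq_zero, ← hL, ← hL] at hab
    exact hab.imp e1.2 e2.2
end InvFlat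
end

section
open TensorProduct

set_option linter.unusedVariables false
namespace InvFlat

theorem key_mem (R A B M : Type) [CommRing R] [CommRing A] [Algebra R A] [AddCommGroup M] [Module A M] [Module R M]
    [IsScalarTower R A M] [Module.Flat R M] (p : Ideal R) [p.IsPrime] (P : Ideal A) [P.IsPrime]
    [CommRing B] [Algebra A B] [Algebra R B] [IsScalarTower R A B] [IsLocalization.AtPrime B P] (y : M) :
    ((1 : B) ⊗ₜ[A] y) ∈ (p.map (algebraMap R B) • ⊤ : Submodule B (B ⊗[A] M)) ↔
      ∃ t ∉ P, t • (y ⊗ₜ[R] (1 : p.ResidueField)) = 0 := by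
  rw [mem_map_smul_top, ← mem_map_smul_top (B := A)]
  have := mem_loc P.primeCompl (TensorProduct.mk A B M 1) (p.map (algebraMap R A)) y
  refine this.trans (exists_congr fun t => and_congr Iff.rfl ?_)
  rw [mem_map_smul_top, ← res_tmul_zero, TensorProduct.smul_tmul', ← (TensorProduct.comm R p.ResidueField M).map_eq_zero_iff]
  rfl

theorem scale (A B M : Type) [CommRing A] [AddCommGroup M] [Module A M] (P : Ideal A) [P.IsPrime]
    [CommRing B] [Algebra A B] [IsLocalization.AtPrime B P] (x : B ⊗[A] M) :
    ∃ y : M, ∃ s : B, IsUnit s ∧ s • x = 1 ⊗ₜ y := by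
  obtain ⟨⟨y, s⟩, h⟩ := IsLocalizedModule.surj P.primeCompl (TensorProduct.mk A B M 1) x
  refine ⟨y, algebraMap A B s, IsLocalization.map_units B s, ?_⟩
  rw [algebraMap_smul]
  exact h

theorem hH_lemma (R A B M : Type) [CommRing R] [CommRing A] [IsNoetherianRing A] [Algebra R A] [AddCommGroup M] [Module A M] [Module R M]
    [IsScalarTower R A M] [Module.Flat R M] (p : Ideal R) [p.IsPrime] (P : Ideal A) [P.IsPrime]
    [CommRing B] [Algebra A B] [Algebra R B] [IsScalarTower R A B] [IsLocalization.AtPrime B P]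
    (hJ : (p.map (algebraMap R B)).IsPrime)
    (hemb : ∀ q q' : Ideal A,
      q ∈ associatedPrimes A (M ⊗[R] p.ResidueField) →
      q' ∈ associatedPrimes A (M ⊗[R] p.ResidueField) → q ≤ q' → q = q')
    (x0 : B ⊗[A] M)
    (h0 : ∀ b : B, b • x0 ∈ (p.map (algebraMap R B) • ⊤ : Submodule B (B ⊗[A] M)) → b ∈ p.map (algebraMap R B))
    (d : B) (hd : d ∉ p.map (algebraMap R B)) (x : B ⊗[A] M)
    (hx : d • x ∈ (p.map (algebraMap R B) • ⊤ : Submodule B (B ⊗[A] M))) :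
    x ∈ (p.map (algebraMap R B) • ⊤ : Submodule B (B ⊗[A] M)) := by
  set J := p.map (algebraMap R B) with hJdef
  set ξ := J.comap (algebraMap A B) with hξ
  have hξp : ξ.IsPrime := hJ.comap _
  -- units
  have hu : ∀ {s : B}, IsUnit s → ∀ z : B ⊗[A] M, s • z ∈ (J • ⊤ : Submodule B (B ⊗[A] M)) ↔ z ∈ (J • ⊤ : Submodule B (B ⊗[A] M)) := by
    intro s hs z
    exact Submodule.smul_mem_iff_of_isUnit _ hs
  have hPu : ∀ t ∉ P, IsUnit (algebraMap A B t) := fun t ht => IsLocalization.map_units B (⟨t, ht⟩ : P.primeCompl)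
  have hPξ : ∀ t ∉ P, t ∉ ξ := fun t ht h => hJ.ne_top (Ideal.eq_top_of_isUnit_mem _ h (hPu t ht))
  have key := fun y : M => key_mem R A B M p P y
  have hsm : ∀ (a : A) (y : M), algebraMap A B a • ((1 : B) ⊗ₜ[A] y) = 1 ⊗ₜ (a • y) := by
    intro a y
    rw [algebraMap_smul, TensorProduct.smul_tmul', TensorProduct.smul_tmul]
  have hsm2 : ∀ (a : A) (y : M), (a • y) ⊗ₜ[R] (1 : p.ResidueField) = a • (y ⊗ₜ[R] (1 : p.ResidueField)) := by
    intro a y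
    rw [TensorProduct.smul_tmul']
  obtain ⟨y0, s0, hs0, hy0⟩ := scale A B M P x0
  obtain ⟨y, s, hs, hy⟩ := scale A B M P x
  -- J kills mod J
  have hkill : ∀ c ∈ ξ, ∀ z : M, ∃ t ∉ P, (t * c) • (z ⊗ₜ[R] (1 : p.ResidueField)) = 0 := by
    intro c hc z
    obtain ⟨t, ht, h⟩ := (key (c • z)).1 (by rw [← hsm]; exact Submodule.smul_mem_smul hc trivial)
    exact ⟨t, ht, by rw [mul_smul, ← hsm2, h]⟩
  -- finite generation
  have hfin : ∃ t0 ∉ P, ∀ c ∈ ξ, ∀ z : M, (z = y0 ∨ z = y) → (t0 * c) • (z ⊗ₜ[R] (1 : p.ResidueField)) = 0 := by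
    have hfg : ξ.FG := IsNoetherian.noetherian ξ
    refine Submodule.fg_induction (motive := fun I _ => I ≤ ξ → ∃ t0 ∉ P, ∀ c ∈ I, ∀ z : M, (z = y0 ∨ z = y) → (t0 * c) • (z ⊗ₜ[R] (1 : p.ResidueField)) = 0) ?_ ?_ ξ hfg le_rfl
    · intro c hc
      have hc : c ∈ ξ := hc (Submodule.mem_span_singleton_self c)
      obtain ⟨t1, h1, e1⟩ := hkill c hc y0
      obtain ⟨t2, h2, e2⟩ := hkill c hc y
      refine ⟨t1 * t2, fun h => (‹P.IsPrime›.mem_or_mem h).elim h1 h2, ?_⟩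
      intro c' hc' z hz
      obtain ⟨u, rfl⟩ := Submodule.mem_span_singleton.1 hc'
      rcases hz with rfl | rfl
      · rw [show t1 * t2 * u • c = (t2 * u) * (t1 * c) by rw [smul_eq_mul]; ring, mul_smul, e1, smul_zero]
      · rw [show t1 * t2 * u • c = (t1 * u) * (t2 * c) by rw [smul_eq_mul]; ring, mul_smul, e2, smul_zero]
    · intro I1 I2 _ _ H1 H2 hle
      obtain ⟨t1, h1, e1⟩ := H1 (le_sup_left.trans hle)
      obtain ⟨t2, h2, e2⟩ := H2 (le_sup_right.trans hle)
      refine ⟨t1 * t2, fun h => (‹P.IsPrime›.mem_or_mem h).elim h1 h2, ?_⟩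
      intro c' hc' z hz
      obtain ⟨u, hu, v, hv, rfl⟩ := Submodule.mem_sup.1 hc'
      rw [show t1 * t2 * (u + v) = t2 * (t1 * u) + t1 * (t2 * v) by ring, add_smul, mul_smul, e1 u hu z hz, mul_smul, e2 v hv z hz]
      simp
  obtain ⟨t0, ht0, hk⟩ := hfin
  have hass : ξ ∈ associatedPrimes A (M ⊗[R] p.ResidueField) := by
    refine isAssociatedPrime_iff.2 ⟨hξp, t0 • (y0 ⊗ₜ[R] (1 : p.ResidueField)), ?_⟩
    ext c
    rw [Submodule.mem_colon_singleton, Submodule.mem_bot, smul_smul, mul_comm]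
    refine ⟨fun hc => hk c hc y0 (Or.inl rfl), fun hc => ?_⟩
    have h1 := (key (c • y0)).2 ⟨t0, ht0, by rw [hsm2, smul_smul, hc]⟩
    rw [← hsm, ← hy0, smul_smul] at h1
    have := h0 _ h1
    exact (Ideal.mul_unit_mem_iff_mem J hs0).1 this
  by_contra hxn
  obtain ⟨⟨a, sd⟩, ha⟩ := IsLocalization.surj P.primeCompl d
  have usd := IsLocalization.map_units B sd
  have haξ : a ∉ ξ := by
    intro h
    refine hd ((Ideal.mul_unit_mem_iff_mem J usd).1 ?_)
    rw [ha]; exact h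
  have hya : ((1 : B) ⊗ₜ[A] (a • y)) ∈ (J • ⊤ : Submodule B (B ⊗[A] M)) := by
    rw [← hsm, ← hy, smul_smul]
    have e : algebraMap A B a * s = (algebraMap A B sd * s) * d := by
      rw [show algebraMap A B a = _ from ha.symm]; ring
    rw [e, mul_smul]
    exact Submodule.smul_mem _ _ hx
  have hyn : ((1 : B) ⊗ₜ[A] y) ∉ (J • ⊤ : Submodule B (B ⊗[A] M)) := by
    rw [← hy, hu hs]; exact hxn
  obtain ⟨t, ht, e⟩ := (key _).1 hya
  have hne : (t0 * t) • (y ⊗ₜ[R] (1 : p.ResidueField)) ≠ 0 := by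
    intro h
    exact hyn ((key y).2 ⟨t0 * t, fun h => (‹P.IsPrime›.mem_or_mem h).elim ht0 ht, h⟩)
  obtain ⟨q', hq', hle⟩ := exists_le_isAssociatedPrime_of_isNoetherianRing A _ hne
  have h1 : ξ ≤ q' := by
    intro c hc
    apply hle
    rw [Submodule.mem_colon_singleton, Submodule.mem_bot, smul_smul, show c * (t0 * t) = t * (t0 * c) by ring, mul_smul, hk c hc y (Or.inr rfl), smul_zero]
  have h2 : a ∈ q' := by
    apply hle
    rw [Submodule.mem_colon_singleton, Submodule.mem_bot, smul_smul, show a * (t0 * t) = t0 * (t * a) by ring, mul_smul, mul_smul t a, ← hsm2, e, smul_zero]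
  exact haξ ((hemb ξ q' hass hq' h1).symm ▸ h2)
end InvFlat
end

section
open TensorProduct

set_option linter.unusedVariables false
namespace InvFlat

theorem exists_r (R : Type) [CommRing R] [IsNoetherianRing R]
    (U : TopologicalSpace.Opens (PrimeSpectrum R)) (hU : Dense (U : Set (PrimeSpectrum R)))
    (p : Ideal R) [p.IsPrime] : ∃ q : Ideal R, q.IsPrime ∧ q ≤ p ∧ ∃ r ∉ q, 
      ∀ x : PrimeSpectrum R, r ∉ x.asIdeal → x ∈ U := by
  obtain ⟨q, hq, hqp⟩ := Ideal.exists_minimalPrimes_le (I := (⊥ : Ideal R)) (J := p) bot_le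
  have hqpr : q.IsPrime := hq.1.1
  refine ⟨q, hqpr, hqp, ?_⟩
  have hZ : PrimeSpectrum.zeroLocus (q : Set R) ∈ irreducibleComponents (PrimeSpectrum R) := by
    rw [← PrimeSpectrum.zeroLocus_minimalPrimes]
    exact ⟨q, hq, rfl⟩
  obtain ⟨o, ho, hne, hoZ⟩ := 
    TopologicalSpace.NoetherianSpace.exists_isOpen_nonempty_subset_irreducibleComponent _ hZ
  obtain ⟨x, hxo, hxU⟩ := hU.inter_open_nonempty o ho hne
  have hqx : q ≤ x.asIdeal := hoZ hxo
  obtain ⟨v, ⟨r, rfl⟩, hxr, hrU⟩ := 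
    PrimeSpectrum.isTopologicalBasis_basic_opens.exists_subset_of_mem_open hxU U.isOpen
  exact ⟨r, fun h => hxr (hqx h), fun y hy => hrU hy⟩

theorem loc_equiv (A M : Type) [CommRing A] [AddCommGroup M] [Module A M] (P : Ideal A) [P.IsPrime] : 
    Nonempty (Localization.AtPrime P ⊗[A] M ≃ₗ[Localization.AtPrime P] LocalizedModule P.primeCompl M) :=
  ⟨(IsLocalizedModule.isBaseChange P.primeCompl (Localization.AtPrime P) 
    (LocalizedModule.mkLinearMap P.primeCompl M)).equiv⟩

theorem inv_away (A M : Type) [CommRing A] [IsNoetherianRing A] [AddCommGroup M] [Module A M] [Module.Finite A M] (r : A)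
    (h : ∀ (P : Ideal A) (_ : P.IsPrime), r ∉ P → Nonempty ((LocalizedModule P.primeCompl M) ≃ₗ[Localization.AtPrime P]
        Localization.AtPrime P)) : Module.Invertible (Localization.Away r) (Localization.Away r ⊗[A] M) := by
  have : Module.FinitePresentation A M := Module.finitePresentation_of_finite A M
  apply inv_of_local_bc
  intro Q hQ
  let P := Q.comap (algebraMap A (Localization.Away r))
  have hPp : P.IsPrime := hQ.isPrime.comap _
  have hr : r ∉ P := fun h => hQ.ne_top (Ideal.eq_top_of_isUnit_mem _ h (IsLocalization.Away.algebraMap_isUnit r))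
  obtain ⟨e⟩ := h P hPp hr
  obtain ⟨e2⟩ := loc_equiv A M P
  have h1 : Module.Invertible (Localization.AtPrime P) (Localization.AtPrime P ⊗[A] M) := 
    Module.Invertible.congr (e2.trans e).symm
  refine inv_bc (IsLocalization.liftAlgHom (M := P.primeCompl) (f := Algebra.ofId A (Localization.AtPrime Q)) ?_) h1
  intro y
  change IsUnit (algebraMap A (Localization.AtPrime Q) y)
  rw [IsScalarTower.algebraMap_apply A (Localization.Away r) (Localization.AtPrime Q)]
  exact IsLocalization.map_units (Localization.AtPrime Q) (⟨_, y.2⟩ : Q.primeCompl)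

theorem red_map (R A B : Type) [CommRing R] [CommRing A] [Algebra R A] [Algebra.Smooth R A] [Module.Flat R A]
    (q : Ideal R) [q.IsPrime] (P : Ideal A) [P.IsPrime] [CommRing B] [Algebra A B] [Algebra R B] [IsScalarTower R A B] 
    [IsLocalization.AtPrime B P] : IsReduced (B ⧸ q.map (algebraMap R B)) := by
  rw [← Ideal.isRadical_iff_quotient_reduced]
  intro x hx
  obtain ⟨n, hn⟩ := hx
  obtain ⟨⟨a, s⟩, h⟩ := IsLocalization.surj P.primeCompl x
  have us := IsLocalization.map_units B s
  have key : ∀ a : A, algebraMap A B a ∈ q.map (algebraMap R B) ↔ ∃ t ∈ P.primeCompl, t * a ∈ q.map (algebraMap R A) := by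
    intro a
    rw [← mem_smul_top_ring, ← mem_map_smul_top (B := A)]
    have := mem_loc P.primeCompl (Algebra.linearMap A B) (q.map (algebraMap R A)) a
    simp only [Ideal.smul_top_eq_map, smul_eq_mul, Ideal.mul_top, Algebra.linearMap_apply] at this ⊢
    exact this
  have h1 : algebraMap A B (a ^ n) ∈ q.map (algebraMap R B) := by
    rw [map_pow, ← h, mul_pow]
    exact Ideal.mul_mem_right _ _ hn
  obtain ⟨t, ht, h2⟩ := (key _).1 h1
  have h3 : (t * a) ^ (n + 1) ∈ q.map (algebraMap R A) := by
    rw [show (t * a) ^ (n + 1) = (t ^ n * a) * (t * a ^ n) by ring]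
    exact Ideal.mul_mem_left _ _ h2
  have h4 := (key a).2 ⟨t, ht, isRadical_map R A q _ _ h3⟩
  rw [← show _ = algebraMap A B a from h] at h4
  exact (Ideal.mul_unit_mem_iff_mem _ us).1 h4

theorem main (R : Type) [CommRing R] [IsNoetherianRing R]
    (U : TopologicalSpace.Opens (PrimeSpectrum R)) (hU : Dense (U : Set (PrimeSpectrum R)))
    (A : Type) [CommRing A] [Algebra R A] [Algebra.Smooth R A]
    (M : Type) [AddCommGroup M] [Module A M] [Module R M] [IsScalarTower R A M]
    [Module.Finite A M] [Module.Flat R M]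
    (hinv : ∀ (P : Ideal A) (hP : P.IsPrime),
      (⟨P.comap (algebraMap R A), hP.comap _⟩ : PrimeSpectrum R) ∈ U →
      Nonempty ((LocalizedModule P.primeCompl M) ≃ₗ[Localization.AtPrime P]
        Localization.AtPrime P))
    (P : Ideal A) [P.IsPrime] (p : Ideal R) [p.IsPrime] (hPp : p = P.under R)
    (hemb : ∀ q q' : Ideal A,
      q ∈ associatedPrimes A (M ⊗[R] p.ResidueField) →
      q' ∈ associatedPrimes A (M ⊗[R] p.ResidueField) →
      q ≤ q' → q = q')
    (S B : Type) [CommRing S] [Algebra R S] [IsLocalization.AtPrime S p] [CommRing B] [Algebra A B]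
    [IsLocalization.AtPrime B P] [Algebra R B] [IsScalarTower R A B] [IsLocalRing S] [IsLocalRing B] 
    [Algebra S B] [IsScalarTower R S B] :
    Nonempty (B ⊗[A] M ≃ₗ[B] B) := by
  have : Module.Flat R A := inferInstance
  have : IsNoetherianRing A := Algebra.FiniteType.isNoetherianRing R A
  have : IsNoetherianRing S := IsLocalization.isNoetherianRing p.primeCompl S inferInstance
  have : IsNoetherianRing B := IsLocalization.isNoetherianRing P.primeCompl B inferInstance
  have : Module.Flat A B := IsLocalization.flat B P.primeCompl
  have : Module.Flat R B := Module.Flat.trans R A B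
  have : Module.Flat S B := (Module.flat_iff_of_isLocalization S p.primeCompl _).2 inferInstance
  have : Module.Flat R (B ⊗[A] M) := flat_bc R A B M
  have : IsScalarTower R S (B ⊗[A] M) := inferInstance
  have : Module.Flat S (B ⊗[A] M) := (Module.flat_iff_of_isLocalization S p.primeCompl _).2 inferInstance
  have hmS : IsLocalRing.maximalIdeal S = p.map (algebraMap R S) := (IsLocalization.AtPrime.map_eq_maximalIdeal p S).symm
  have hmB : (IsLocalRing.maximalIdeal S).map (algebraMap S B) = p.map (algebraMap R B) := by
    rw [hmS, Ideal.map_map, ← IsScalarTower.algebraMap_eq]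
  have hJ : (p.map (algebraMap R B)).IsPrime := by
    subst hPp
    exact isPrime_map R A B P
  have : IsLocalHom (algebraMap S B) := by
    apply ((IsLocalRing.local_hom_TFAE (algebraMap S B)).out 0 2).2
    rw [hmB]
    exact IsLocalRing.le_maximalIdeal hJ.ne_top
  obtain ⟨n, hF⟩ := exists_FDL R A P B (B ⊗[A] M)
  have hF2 := FFR_of_FDL B n (B ⊗[A] M) hF
  obtain ⟨q0, hq0, hq0p, r, hrq, hrU⟩ := exists_r R U hU p
  have hdis : Disjoint (p.primeCompl : Set R) q0 := by
    rw [Set.disjoint_left]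
    exact fun x hx hx' => hx (hq0p hx')
  have hqS : (q0.map (algebraMap R S)).IsPrime := IsLocalization.isPrime_of_isPrime_disjoint p.primeCompl S q0 hq0 hdis
  have hqu := IsLocalization.under_map_of_isPrime_disjoint p.primeCompl S hq0 hdis
  have hqB : (q0.map (algebraMap R S)).map (algebraMap S B) = q0.map (algebraMap R B) := by
    rw [Ideal.map_map, ← IsScalarTower.algebraMap_eq]
  refine T2 S B (B ⊗[A] M) (hmB ▸ hJ) n hF2 (q0.map (algebraMap R S)) ?_ (algebraMap R S r) ?_ ?_ ?_
  · rw [hqB]; exact red_map R A B q0 P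
  · intro h
    exact hrq (hqu ▸ h : r ∈ q0)
  · apply inv_tower
    refine inv_unit (algebraMap R A r) (inv_away A M _ ?_) ?_
    · intro Q hQ hr
      exact hinv Q hQ (hrU _ hr)
    · rw [IsScalarTower.algebraMap_apply A B, ← IsScalarTower.algebraMap_apply R A B, IsScalarTower.algebraMap_apply R S B]
      exact IsLocalization.Away.algebraMap_isUnit _
  · rw [hmB]
    intro x0 h0 d hd x hx
    have hk : ∀ z : B ⊗[A] M, z ∈ (IsLocalRing.maximalIdeal S • ⊤ : Submodule S (B ⊗[A] M)) ↔ 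
        z ∈ (p.map (algebraMap R B) • ⊤ : Submodule B (B ⊗[A] M)) := by
      intro z
      rw [← mem_map_smul_top (B := B), hmB]
    rw [hk] at hx ⊢
    replace h0 := fun b hb => h0 b ((hk _).2 hb)
    exact hH_lemma R A B M p P hJ hemb x0 h0 d hd x hx
end InvFlat
end


/-!
STATEMENT 0: Let `S` be a locally noetherian scheme, `U` a dense open of `S`,
`f : X → S` a smooth morphism and `M` a coherent `O_X`-module.  If `M` is invertible over
`X_U`, flat over `S`, and has no embedded components on the fibers of `X/S`, then `M` is
an invertible `O_X`-module.

Affine formulation: `R` a noetherian commutative ring, `U ⊆ Spec R` a dense open,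
`A` a smooth `R`-algebra (so that `Spec A → Spec R` is a smooth morphism of finite
presentation) and `M` a finitely generated `A`-module (a coherent sheaf on `Spec A`) which:
* is invertible over `X_U`: for every prime `P` of `A` lying over a point of `U`, the
  localization `M_P` is free of rank one over `A_P`;
* is flat over `R`;
* has no embedded components on the fibers: for every prime `p` of `R`, the set of
  associated primes of the fiber `M ⊗_R k(p)` contains no strict inclusion (every
  associated point of `M ⊗ k(p)` is a generic point of its support).
Conclusion: `M` is invertible, i.e. `M_P` is free of rank one over `A_P` for every prime
`P` of `A`.
-/

open TensorProduct IsLocalRing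

theorem invertible_of_flat_of_no_embedded_components_on_fibers
    (R : Type) [CommRing R] [IsNoetherianRing R]
    (U : TopologicalSpace.Opens (PrimeSpectrum R)) (hU : Dense (U : Set (PrimeSpectrum R)))
    (A : Type) [CommRing A] [Algebra R A] [Algebra.Smooth R A]
    (M : Type) [AddCommGroup M] [Module A M] [Module R M] [IsScalarTower R A M]
    [Module.Finite A M] [Module.Flat R M]
    -- `M` is invertible over `X_U`
    (hinv : ∀ (P : Ideal A) (hP : P.IsPrime),
      (⟨P.comap (algebraMap R A), hP.comap _⟩ : PrimeSpectrum R) ∈ U →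
      Nonempty ((LocalizedModule P.primeCompl M) ≃ₗ[Localization.AtPrime P]
        Localization.AtPrime P))
    -- no embedded components on the fibers: no strict inclusions among associated primes
    -- of `M ⊗_R k(p)`
    (hemb : ∀ (p : Ideal R) (_ : p.IsPrime), ∀ q q' : Ideal A,
      q ∈ associatedPrimes A
        (M ⊗[R] (ResidueField (Localization.AtPrime p))) →
      q' ∈ associatedPrimes A
        (M ⊗[R] (ResidueField (Localization.AtPrime p))) →
      q ≤ q' → q = q') :
    ∀ (P : Ideal A) (_ : P.IsPrime),
      Nonempty ((LocalizedModule P.primeCompl M) ≃ₗ[Localization.AtPrime P]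
        Localization.AtPrime P) := by
  intro P hP
  let _ := Localization.AtPrime.algebraOfLiesOver (P.under R) P
  obtain ⟨e⟩ := InvFlat.main R U hU A M hinv P (P.under R) rfl (hemb (P.under R) inferInstance)
    (Localization.AtPrime (P.under R)) (Localization.AtPrime P)
  obtain ⟨e2⟩ := InvFlat.loc_equiv A M P
  exact ⟨e2.symm.trans e⟩
end

section
/- Let R be a regular local ring (or more generally a locally factorial noetherian integral domain) and M a finitely generated reflexive R-module of rank 1. Then M is isomorphic to an invertible (locally free rank 1) R-module. -/
/-!
STATEMENT 2: Let `R` be a regular local ring (or more generally a locally factorial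
noetherian integral domain) and `M` a finitely generated reflexive `R`-module of rank 1.
Then `M` is isomorphic to an invertible (locally free of rank 1) `R`-module.

We formalize the general version: `R` is a noetherian integral domain which is locally
factorial (all localizations at primes are UFDs), `M` is a finitely generated `R`-module
which is reflexive (the canonical map to the double dual is bijective) and of rank 1
(`Frac(R) ⊗ M` is 1-dimensional).  The conclusion "locally free of rank 1" is expressed
as: the localization of `M` at every prime is a free module of rank 1 over the local ring.
-/

/-- Over a noetherian factorial domain, a rank one dual module is free of rank one. -/
theorem dual_equiv_of_rank_one {A N : Type*} [CommRing A] [IsDomain A] [IsNoetherianRing A]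
    [UniqueFactorizationMonoid A] [AddCommGroup N] [Module A N] [Module.Finite A N]
    (hr : Module.rank A (Module.Dual A N) = 1) :
    Nonempty (Module.Dual A N ≃ₗ[A] A) := by
  have hne : ∃ φ : Module.Dual A N, φ ≠ 0 := by
    by_contra! h
    have : Subsingleton (Module.Dual A N) := ⟨fun x y => by rw [h x, h y]⟩
    rw [rank_subsingleton'] at hr
    exact zero_ne_one hr
  obtain ⟨φ₀, hφ₀⟩ := hne
  have : IsNoetherian A (Module.Dual A N) := inferInstance
  obtain ⟨L, ⟨φ, hφ, rfl⟩, hmax⟩ := set_has_maximal_iff_noetherian.mpr this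
    {L | ∃ φ : Module.Dual A N, φ ≠ 0 ∧ L = Submodule.span A {φ}} ⟨_, φ₀, hφ₀, rfl⟩
  have key : ∀ ψ : Module.Dual A N, ∃ c : A, c • φ = ψ := by
    intro ψ
    have hdep : ¬ LinearIndependent A ![φ, ψ] := by
      intro h
      have := h.cardinal_lift_le_rank
      rw [hr] at this
      simp at this
    rw [LinearIndependent.pair_iff] at hdep
    push Not at hdep
    obtain ⟨s, t, hst, h0⟩ := hdep
    have ht : t ≠ 0 := by
      rintro rfl
      simp only [zero_smul, add_zero, smul_eq_zero] at hst
      rcases hst with h | h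
      · exact h0 h rfl
      · exact hφ h
    obtain ⟨a, b, c, hrel, hca, hcb⟩ :=
      UniqueFactorizationMonoid.exists_reduced_factors t ht s
    have hc : c ≠ 0 := by rintro rfl; simp at hca; exact ht hca.symm
    have ha : a ≠ 0 := by rintro rfl; simp at hca; exact ht hca.symm
    have hrel2 : b • φ + a • ψ = 0 := by
      have : c • (b • φ + a • ψ) = 0 := by
        rw [smul_add, smul_smul, smul_smul, hca, hcb, hst]
      exact (smul_eq_zero.mp this).resolve_left hc
    have hdvd : ∀ n, ∃ x, φ n = a * x := by
      intro n
      have h1 : b * φ n + a * ψ n = 0 := by simpa using LinearMap.congr_fun hrel2 n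
      exact hrel.dvd_of_dvd_mul_left (z := φ n)
        ⟨-ψ n, by linear_combination h1⟩
    choose f hf using hdvd
    let φ' : Module.Dual A N :=
      { toFun := f
        map_add' := fun x y => mul_left_cancel₀ ha (by
          rw [← hf, mul_add, ← hf, ← hf, map_add])
        map_smul' := fun r x => mul_left_cancel₀ ha (by
          rw [← hf, map_smul, hf]; simp only [smul_eq_mul, RingHom.id_apply]; ring) }
    have hφ' : φ = a • φ' := by
      ext n; exact hf n
    have hφ'0 : φ' ≠ 0 := by
      intro h; rw [h, smul_zero] at hφ'; exact hφ hφ'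
    have hle : Submodule.span A {φ} ≤ Submodule.span A {φ'} := by
      rw [Submodule.span_singleton_le_iff_mem, Submodule.mem_span_singleton]
      exact ⟨a, hφ'.symm⟩
    have hmem : φ' ∈ Submodule.span A {φ} := by
      by_contra hn
      refine hmax _ ⟨φ', hφ'0, rfl⟩ (lt_of_le_not_ge hle fun h => hn ?_)
      exact h (Submodule.mem_span_singleton_self _)
    obtain ⟨d, hd⟩ := Submodule.mem_span_singleton.mp hmem
    have hda : d * a = 1 := by
      have : (d * a - 1) • φ' = 0 := by
        ext n
        have h3 : d * φ n = φ' n := LinearMap.congr_fun hd n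
        have h4 : φ n = a * φ' n := LinearMap.congr_fun hφ' n
        have : (d * a - 1) * φ' n = 0 := by linear_combination h3 - d * h4
        exact this
      exact sub_eq_zero.mp ((smul_eq_zero.mp this).resolve_right hφ'0)
    refine ⟨-(d * b), ?_⟩
    ext n
    have h1 : b * φ n + a * ψ n = 0 := by simpa using LinearMap.congr_fun hrel2 n
    have : (-(d * b)) * φ n = ψ n := by linear_combination (-d) * h1 + ψ n * hda
    exact this
  refine ⟨(LinearEquiv.ofBijective (LinearMap.toSpanSingleton A _ φ) ⟨?_, ?_⟩).symm⟩
  · rw [← LinearMap.ker_eq_bot]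
    exact LinearMap.ker_toSpanSingleton A hφ
  · exact fun ψ => key ψ

/-- Dualizing a finitely presented module commutes with localization at a prime. -/
theorem exists_dual_localization {R D : Type*} [CommRing R] [AddCommGroup D] [Module R D]
    [Module.FinitePresentation R D] (P : Ideal R) [P.IsPrime] :
    ∃ g : Module.Dual R D →ₗ[R]
      Module.Dual (Localization.AtPrime P) (LocalizedModule P.primeCompl D),
      IsLocalizedModule P.primeCompl g :=
  ⟨_, Module.FinitePresentation.isLocalizedModule_mapExtendScalars P.primeCompl
      (LocalizedModule.mkLinearMap P.primeCompl D)
      (Algebra.linearMap R (Localization.AtPrime P)) (Localization.AtPrime P)⟩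

theorem reflexive_rank_one_is_invertible
    (R : Type*) [CommRing R] [IsDomain R] [IsNoetherianRing R]
    (hfact : ∀ (P : Ideal R) (_ : P.IsPrime),
      UniqueFactorizationMonoid (Localization.AtPrime P))
    (M : Type*) [AddCommGroup M] [Module R M] [Module.Finite R M]
    [Module.IsReflexive R M]
    (hrank : Module.rank (FractionRing R)
      (TensorProduct R (FractionRing R) M) = 1) :
    ∀ (P : Ideal R) (_ : P.IsPrime),
      Nonempty ((LocalizedModule P.primeCompl M) ≃ₗ[Localization.AtPrime P]
        Localization.AtPrime P) := by
  intro P hP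
  have := hfact P hP
  have hD : Module.FinitePresentation R (Module.Dual R M) :=
    Module.finitePresentation_of_finite R _
  have hdom : IsDomain (Localization.AtPrime P) := inferInstance
  have hnoe : IsNoetherianRing (Localization.AtPrime P) :=
    IsLocalization.isNoetherianRing P.primeCompl _ inferInstance
  have hle : P.primeCompl ≤ nonZeroDivisors R := P.primeCompl_le_nonZeroDivisors
  obtain ⟨g, hg⟩ := exists_dual_localization (D := Module.Dual R M) P
  let f := g ∘ₗ (Module.evalEquiv R M).toLinearMap
  have hf : IsLocalizedModule P.primeCompl f :=
    IsLocalizedModule.of_linearEquiv_right _ _ _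
  let e := (IsLocalizedModule.linearEquiv P.primeCompl
    (LocalizedModule.mkLinearMap P.primeCompl M) f).extendScalarsOfIsLocalization
      P.primeCompl (Localization.AtPrime P)
  have h1 : Module.rank R M = 1 := by
    have := (TensorProduct.isBaseChange R M (FractionRing R)).lift_rank_eq
    rw [hrank] at this
    simpa using this.symm
  have h2 : Module.rank (Localization.AtPrime P)
      (Module.Dual (Localization.AtPrime P)
        (LocalizedModule P.primeCompl (Module.Dual R M))) = 1 := by
    have := IsLocalizedModule.lift_rank_eq P.primeCompl f hle
    rw [h1] at this
    rw [IsLocalization.rank_eq (Localization.AtPrime P) P.primeCompl hle]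
    simpa using this
  obtain ⟨e'⟩ := dual_equiv_of_rank_one (A := Localization.AtPrime P)
    (N := LocalizedModule P.primeCompl (Module.Dual R M)) h2
  exact ⟨e.trans e'⟩
end

section
/- Let S and X be locally noetherian schemes, U a schematically dense open of S, f : X → S a morphism with reduced fibers, W an S-dense open of X containing X_U, and M a coherent, S-flat O_X-module such that for every s ∈ S the associated points of M ⊗ k(s) are contained in the associated points of X_s. Then depth_Z(M) ≥ 2 for Z := X − W; consequently M is Z-closed, i.e. M → j_*(M|_W) is an isomorphism, where j : W → X is the inclusion. -/
/-!
STATEMENT 4: Let `S`, `X` be locally noetherian schemes, `U` a schematically dense open of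
`S`, `f : X → S` a morphism with reduced fibers, `W` an `S`-dense open of `X` containing
`X_U`, and `M` a coherent `S`-flat `O_X`-module such that for every `s ∈ S` the associated
points of `M ⊗ k(s)` are contained in the associated points of `X_s`.  Then
`depth_Z(M) ≥ 2` for `Z := X − W`; consequently `M` is `Z`-closed.

Local formulation at a point `z ∈ Z` lying over `s := f(z)`.  Write `R = O_{S,s}`,
`A = O_{X,z}` (noetherian local rings), `I = 𝔪_R·A` so that the fiber `X_s` has local ring
`A⧸I` at `z` and `(M ⊗ k(s))_z = M⧸I·M`.  The hypotheses translate as follows: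
* `s ∉ U` with `U` schematically dense means `s` is not an associated point of `S`, i.e.
  `𝔪_R` is not an associated prime of `R` (equivalently `depth O_{S,s} ≥ 1`);
* the fibers of `f` are reduced: `A⧸I` is reduced;
* `z ∈ Z = X − W` with `W` an `S`-dense open means that `z` is not a generic point of its
  fiber, i.e. `𝔪_A` is not a minimal prime over `I`;
* the associated points of `M ⊗ k(s)` are among those of `X_s`: every associated prime of
  the `A`-module `M⧸I·M` is an associated prime of `A⧸I`.
The conclusion `depth_Z(M) ≥ 2` means that at every such point `z` the stalk `M_z` admits
a regular sequence of length `2` in the maximal ideal (EGA IV 5.10.5: this is equivalent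
to `M` being `Z`-closed, i.e. `M → j_*(M|_W)` being an isomorphism).
-/

open IsLocalRing
open scoped Pointwise

/-- In a flat module, `t • z ∈ K M` forces `z ∈ (K : t) M`. -/
theorem aux_colon {R M : Type*} [CommRing R] [AddCommGroup M] [Module R M] [Module.Flat R M]
    (K J : Ideal R) (t : R) (hJ : ∀ a, a * t ∈ K → a ∈ J) (z : M)
    (hz : t • z ∈ (K • ⊤ : Submodule R M)) : z ∈ (J • ⊤ : Submodule R M) := by
  have htop : (⊤ : Submodule R M) = Submodule.span R (Set.range (id : M → M)) := by simp
  rw [htop, Submodule.mem_ideal_smul_span_iff_exists_sum] at hz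
  obtain ⟨a, ha, hsum⟩ := hz
  let f : Option a.support → R := fun o => o.elim t (fun i => - a i)
  let x : Option a.support → M := fun o => o.elim z (fun i => (i : M))
  have h0 : ∑ i, f i • x i = 0 := by
    rw [Fintype.sum_option]
    simp only [f, x, Option.elim, neg_smul, Finset.sum_neg_distrib]
    rw [← hsum, Finsupp.sum, ← Finset.sum_coe_sort a.support]
    simp
  obtain ⟨k, c, y, hx, hc⟩ := Module.Flat.isTrivialRelation_of_sum_smul_eq_zero h0
  have hzz := hx none
  simp only [x, Option.elim] at hzz
  rw [hzz]
  refine Submodule.sum_mem _ fun j _ => Submodule.smul_mem_smul (hJ _ ?_) trivial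
  have h1 := hc j
  rw [Fintype.sum_option] at h1
  have h2 : c none j * t = - ∑ i : a.support, f (some i) * c (some i) j := by
    rw [eq_neg_iff_add_eq_zero, ← h1]
    simp only [f, Option.elim]
    ring
  rw [h2]
  refine K.neg_mem (K.sum_mem fun i _ => K.mul_mem_right _ ?_)
  exact K.neg_mem (ha _)

theorem aux_primary {R M : Type*} [CommRing R] [IsLocalRing R] [IsNoetherianRing R]
    [AddCommGroup M] [Module R M] [Module.Flat R M] (φ : M →ₗ[R] M)
    (hφ : ∀ x, φ x ∈ (maximalIdeal R • ⊤ : Submodule R M) →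
      x ∈ (maximalIdeal R • ⊤ : Submodule R M))
    (n : ℕ) (K : Ideal R) : maximalIdeal R ^ n ≤ K →
    ∀ x, φ x ∈ (K • ⊤ : Submodule R M) → x ∈ (K • ⊤ : Submodule R M) := by
  have hmap : ∀ (L : Ideal R) (x : M), x ∈ (L • ⊤ : Submodule R M) →
      φ x ∈ (L • ⊤ : Submodule R M) := by
    intro L x hx
    have : φ x ∈ (L • ⊤ : Submodule R M).map φ := Submodule.mem_map_of_mem hx
    rw [Submodule.map_smul''] at this
    exact Submodule.smul_mono le_rfl le_top this
  induction K using IsNoetherian.induction with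
  | hgt K ih =>
  intro hn x hx
  by_cases hK : K = ⊤
  · subst hK; simp
  classical
  have hex : ∃ n, maximalIdeal R ^ n ≤ K := ⟨n, hn⟩
  obtain ⟨d, hd⟩ : ∃ d, Nat.find hex = d + 1 := by
    refine Nat.exists_eq_succ_of_ne_zero fun h0 => hK ?_
    have := Nat.find_spec hex
    rw [h0] at this
    simpa using this
  have hd1 : maximalIdeal R ^ (d + 1) ≤ K := hd ▸ Nat.find_spec hex
  have hd2 : ¬ maximalIdeal R ^ d ≤ K := Nat.find_min hex (by omega)
  obtain ⟨t, htm, htK⟩ := SetLike.not_le_iff_exists.mp hd2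
  have hmt : ∀ c ∈ maximalIdeal R, c * t ∈ K := fun c hc =>
    hd1 (by rw [pow_succ']; exact Ideal.mul_mem_mul hc htm)
  have hlt : K < K ⊔ Ideal.span {t} := by
    refine lt_of_le_of_ne le_sup_left fun h => htK ?_
    rw [h]
    exact Ideal.mem_sup_right (Ideal.mem_span_singleton_self t)
  have hxJ := ih _ hlt (hn.trans le_sup_left) x (Submodule.smul_mono_left le_sup_left hx)
  rw [Submodule.sup_smul, Submodule.mem_sup] at hxJ
  obtain ⟨u, hu, v, hv, rfl⟩ := hxJ
  rw [Submodule.ideal_span_singleton_smul, Submodule.mem_smul_pointwise_iff_exists] at hv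
  obtain ⟨y, -, rfl⟩ := hv
  refine Submodule.add_mem _ hu ?_
  have h1 : t • φ y ∈ (K • ⊤ : Submodule R M) := by
    rw [map_add, map_smul] at hx
    exact (Submodule.add_mem_iff_right _ (hmap K u hu)).mp hx
  have h2 : φ y ∈ (maximalIdeal R • ⊤ : Submodule R M) := by
    refine aux_colon K _ t (fun c hc => ?_) _ h1
    by_contra hcm
    have hu : IsUnit c := by simpa using hcm
    exact htK ((Ideal.unit_mul_mem_iff_mem K hu).mp hc)
  have h3 := hφ y h2
  refine Submodule.smul_induction_on h3 (fun c hc w _ => ?_) fun a b ha hb => ?_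
  · rw [smul_smul, mul_comm]
    exact Submodule.smul_mem_smul (hmt c hc) trivial
  · rw [smul_add]; exact Submodule.add_mem _ ha hb

theorem aux_exists_regular {A N : Type*} [CommRing A] [IsLocalRing A] [IsNoetherianRing A]
    [AddCommGroup N] [Module A N] [Module.Finite A N]
    (h : ¬ IsAssociatedPrime (maximalIdeal A) N) :
    ∃ b ∈ maximalIdeal A, IsSMulRegular N b := by
  by_contra! hcon
  have hsub : ((maximalIdeal A : Ideal A) : Set A) ⊆ ⋃ p ∈ associatedPrimes A N, (p : Set A) := by
    rw [biUnion_associatedPrimes_eq_compl_regular]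
    exact fun b hb => hcon b hb
  rw [Ideal.subset_union_prime_finite (f := fun p => p) (associatedPrimes.finite A N) ⊥ ⊥
    (fun p hp _ _ => hp.isPrime)] at hsub
  obtain ⟨p, hp, hle⟩ := hsub
  have : maximalIdeal A = p := le_antisymm hle (le_maximalIdeal hp.isPrime.ne_top)
  exact h (this ▸ hp)

theorem depth_ge_two_on_complement_of_S_dense_open
    (R A : Type*) [CommRing R] [IsLocalRing R] [IsNoetherianRing R]
    [CommRing A] [IsLocalRing A] [IsNoetherianRing A]
    [Algebra R A] [IsLocalHom (algebraMap R A)]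
    (M : Type*) [AddCommGroup M] [Module A M] [Module R M] [IsScalarTower R A M]
    [Module.Finite A M] [Module.Flat R M]
    (I : Ideal A) (hI : I = (maximalIdeal R).map (algebraMap R A))
    -- `s = f(z)` is not an associated point of `S` (it lies outside the schematically
    -- dense open `U`)
    (hs : ¬ IsAssociatedPrime (maximalIdeal R) R)
    -- the fiber of `f` through `z` is reduced
    (hred : IsReduced (A ⧸ I))
    -- `z` is not a generic point of its fiber (it lies outside the `S`-dense open `W`)
    (hz : maximalIdeal A ∉ I.minimalPrimes)
    -- the associated points of `M ⊗ k(s)` are contained in those of `X_s`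
    (hAss : ∀ p : Ideal A, IsAssociatedPrime p (M ⧸ (I • (⊤ : Submodule A M))) →
      IsAssociatedPrime p (A ⧸ I)) :
    ∃ a b : A, a ∈ maximalIdeal A ∧ b ∈ maximalIdeal A ∧
      RingTheory.Sequence.IsWeaklyRegular M [a, b] := by
  subst hI
  set m := maximalIdeal R with hm
  set I := m.map (algebraMap R A) with hI
  have hIle : I ≤ maximalIdeal A := ((local_hom_TFAE (algebraMap R A)).out 0 2).mp ‹_›
  have hcoe : ∀ (K : Ideal R) (x : M), x ∈ (K.map (algebraMap R A) • ⊤ : Submodule A M) ↔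
      x ∈ (K • ⊤ : Submodule R M) := by
    intro K x
    have := Ideal.smul_restrictScalars (S := A) K (⊤ : Submodule A M)
    rw [Submodule.restrictScalars_top] at this
    rw [← this]
    rfl
  -- a regular element of the base
  obtain ⟨r, hrm, hr⟩ := aux_exists_regular hs
  have hrM : IsSMulRegular M r := by
    refine Module.Flat.isSMulRegular_of_isRegular ?_
    exact ⟨hr, fun x y hxy => hr (by simpa [mul_comm] using hxy)⟩
  -- a regular element of the fibre
  have hfib : ¬ IsAssociatedPrime (maximalIdeal A) (M ⧸ (I • (⊤ : Submodule A M))) := by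
    intro h
    have h' := hAss _ h
    rw [isAssociatedPrime_iff] at h'
    obtain ⟨-, x, hx⟩ := h'
    have hxmem : ∀ c, c ∈ maximalIdeal A ↔ c • x = 0 := by
      intro c; rw [hx]; simp [Submodule.mem_colon_singleton]
    obtain ⟨x, rfl⟩ := Ideal.Quotient.mk_surjective x
    have hxI : ∀ c, c ∈ maximalIdeal A ↔ c * x ∈ I := by
      intro c
      rw [hxmem, ← Ideal.Quotient.eq_zero_iff_mem, map_mul]
      rfl
    have hxm : x ∉ maximalIdeal A := by
      intro hxm
      have h2 := (hxI x).mp hxm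
      have h3 : x ∈ I := by
        rw [← Ideal.Quotient.eq_zero_iff_mem] at h2 ⊢
        rw [map_mul] at h2
        exact IsNilpotent.eq_zero ⟨2, by rw [pow_two]; exact h2⟩
      exact (Ideal.ne_top_iff_one _).mp (maximalIdeal.isMaximal A).ne_top
        ((hxI 1).mpr (by simpa using h3))
    have hu : IsUnit x := by simpa using hxm
    refine hz ⟨⟨inferInstance, hIle⟩, fun q hq _ c hc => hq.2 ?_⟩
    exact (Ideal.mul_unit_mem_iff_mem I hu).mp ((hxI c).mp hc)
  obtain ⟨b, hbm, hb⟩ := aux_exists_regular hfib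
  rw [isSMulRegular_quotient_iff_mem_of_smul_mem] at hb
  refine ⟨algebraMap R A r, b, hIle (Ideal.mem_map_of_mem _ hrm), hbm, ?_⟩
  rw [RingTheory.Sequence.isWeaklyRegular_cons_iff,
    RingTheory.Sequence.isWeaklyRegular_singleton_iff]
  refine ⟨fun x y hxy => hrM (by simpa using hxy), ?_⟩
  change IsSMulRegular (M ⧸ ((algebraMap R A r) • ⊤ : Submodule A M)) b
  rw [isSMulRegular_quotient_iff_mem_of_smul_mem]
  intro x hx
  have hspan : ((algebraMap R A r) • ⊤ : Submodule A M) =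
      (Ideal.span {r}).map (algebraMap R A) • ⊤ := by
    rw [Ideal.map_span, Set.image_singleton, Submodule.ideal_span_singleton_smul]
  have key : ∀ n : ℕ, x ∈ ((algebraMap R A r) • ⊤ ⊔ I ^ n • ⊤ : Submodule A M) := by
    intro n
    have h1 := aux_primary (M := M) (Algebra.lsmul R R M b)
      (fun y hy => (hcoe _ _).mp (hb y ((hcoe _ _).mpr hy)))
      n (Ideal.span {r} ⊔ m ^ n) le_sup_right x
      (by
        rw [← hcoe, Ideal.map_sup, Submodule.sup_smul, ← hspan]
        exact Submodule.mem_sup_left hx)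
    rwa [← hcoe, Ideal.map_sup, Submodule.sup_smul, ← hspan, Ideal.map_pow] at h1
  have hInt := Ideal.iInf_pow_smul_eq_bot_of_isLocalRing
    (M := M ⧸ ((algebraMap R A r) • ⊤ : Submodule A M)) I
    (fun h => (maximalIdeal.isMaximal A).ne_top (top_le_iff.mp (h ▸ hIle)))
  rw [← Submodule.Quotient.mk_eq_zero, ← Submodule.mem_bot A, ← hInt, Submodule.mem_iInf]
  intro n
  obtain ⟨u, hu, v, hv, huv⟩ := Submodule.mem_sup.mp (key n)
  have hv' : Submodule.mkQ ((algebraMap R A r) • ⊤ : Submodule A M) v ∈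
      (I ^ n • ⊤ : Submodule A M).map (Submodule.mkQ ((algebraMap R A r) • ⊤)) :=
    Submodule.mem_map_of_mem hv
  rw [Submodule.map_smul''] at hv'
  have := Submodule.smul_mono (le_refl (I ^ n)) le_top hv'
  rw [← huv, Submodule.Quotient.mk_add, (Submodule.Quotient.mk_eq_zero _).mpr hu, zero_add]
  exact this
end
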